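/- arXiv:2005.01036 — 4 statements merged into one kernel-verified Lean document; each statement's English description precedes it below -/
import Mathlib

section
/- Let Γ¹ be a Hermitian 4×4 complex matrix with (Γ¹)² = I, let λ ∈ ℝ, and let M : ℝ → M₄(ℂ) be a continuous matrix-valued function such that ∫ₐ^{+∞} ‖M(x)‖ dx < ∞ for some a ∈ ℝ. Suppose u : ℝ → ℂ⁴ is continuously differentiable, satisfies the eigenvalue equation −iΓ¹u'(x) + M(x)u(x) = λ·u(x) for all x ∈ ℝ, and satisfies u(x) → 0 as x → +∞. Then u ≡ 0. -/
noncomputable section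

open MeasureTheory

abbrev V4 : Type := EuclideanSpace ℂ (Fin 4)

/-- A `4 × 4` complex matrix acting on `ℂ⁴` as a continuous linear map. -/
def Mop (A : Matrix (Fin 4) (Fin 4) ℂ) : V4 →L[ℂ] V4 := Matrix.toEuclideanCLM (𝕜 := ℂ) A

/-!
Conjugating by the bounded group `e^{iΓ¹λx}` removes the constant term of the equation: for
`w(x) = e^{-iΓ¹λx} u(x)` one gets `‖w'‖ ≤ C ‖M‖ ‖w‖`. Grönwall's inequality, run backwards from `b`,
then bounds `‖w(x)‖` by `‖w(b)‖ exp (C ∫ₓᵇ ‖M‖)`; the exponential stays bounded as `b → +∞` while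
`w(b) → 0`. The group is bounded because `(iΓ¹)² = -1` makes it `cos (λx) + sin (λx) iΓ¹`.
-/

open Filter Set Topology

section Gronwall

variable {E : Type*} [NormedAddCommGroup E] [NormedSpace ℝ E]

theorem norm_le_norm_mul_exp_integral_of_norm_deriv_right_le {f f' : ℝ → E} {m : ℝ → ℝ} {a b : ℝ}
    (hf : ContinuousOn f (Icc a b)) (hf' : ∀ x ∈ Ico a b, HasDerivWithinAt f (f' x) (Ici x) x)
    (hm : Continuous m) (bound : ∀ x ∈ Ico a b, ‖f' x‖ ≤ m x * ‖f x‖) :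
    ∀ x ∈ Icc a b, ‖f x‖ ≤ ‖f a‖ * Real.exp (∫ t in a..x, m t) := by
  intro x hx
  -- The fencing lemma wants a strict differential inequality: enlarge `‖f a‖` and `m` by `ε`.
  let B (ε y : ℝ) : ℝ := (‖f a‖ + ε) * Real.exp ((∫ t in a..y, m t) + ε * (y - a))
  have hB (ε y : ℝ) : HasDerivAt (B ε) ((m y + ε) * B ε y) y := by
    have hexponent : HasDerivAt (fun z => (∫ t in a..z, m t) + ε * (z - a)) (m y + ε) y := by
      simpa only [mul_one] using (hm.integral_hasStrictDerivAt a y).hasDerivAt.fun_add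
        (((hasDerivAt_id' y).sub_const a).const_mul ε)
    exact (hexponent.exp.const_mul (‖f a‖ + ε)).congr_deriv (by simp only [B]; ring)
  have hfB (ε : ℝ) (hε : 0 < ε) : ‖f x‖ ≤ B ε x := by
    refine image_norm_le_of_norm_deriv_right_lt_deriv_boundary' hf hf' (by simp [B, hε.le])
      (fun y _ => (hB ε y).continuousAt.continuousWithinAt)
      (fun y _ => (hB ε y).hasDerivWithinAt) (fun y hy hfy => ?_) hx
    have hBpos : 0 < B ε y := by positivity
    calc ‖f' y‖ ≤ m y * ‖f y‖ := bound y hy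
      _ = m y * B ε y := by rw [hfy]
      _ < (m y + ε) * B ε y := mul_lt_mul_of_pos_right (lt_add_of_pos_right _ hε) hBpos
  have hlim : Tendsto (fun ε => B ε x) (𝓝[>] 0) (𝓝 (‖f a‖ * Real.exp (∫ t in a..x, m t))) := by
    have hcont : Continuous fun ε => B ε x := by fun_prop
    exact (hcont.tendsto' 0 _ (by simp [B])).mono_left nhdsWithin_le_nhds
  exact ge_of_tendsto hlim (eventually_mem_nhdsWithin.mono hfB)

theorem norm_le_norm_mul_exp_integral_of_norm_deriv_le_backward {f f' : ℝ → E} {m : ℝ → ℝ}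
    {a b : ℝ} (hab : a ≤ b) (hf : ∀ x ∈ Icc a b, HasDerivAt f (f' x) x) (hm : Continuous m)
    (bound : ∀ x ∈ Icc a b, ‖f' x‖ ≤ m x * ‖f x‖) :
    ‖f a‖ ≤ ‖f b‖ * Real.exp (∫ t in a..b, m t) := by
  have hmem {x : ℝ} (hx : x ∈ Icc (-b) (-a)) : -x ∈ Icc a b :=
    ⟨le_neg.mp hx.2, neg_le.mp hx.1⟩
  have hreflect (x : ℝ) (hx : x ∈ Icc (-b) (-a)) :
      HasDerivAt (fun y => f (-y)) (-f' (-x)) x := by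
    simpa [Function.comp_def] using (hf (-x) (hmem hx)).scomp x (hasDerivAt_neg x)
  have h := norm_le_norm_mul_exp_integral_of_norm_deriv_right_le
    (fun x hx => (hreflect x hx).continuousAt.continuousWithinAt)
    (fun x hx => (hreflect x (Ico_subset_Icc_self hx)).hasDerivWithinAt)
    (hm.comp continuous_neg)
    (fun x hx => by simpa using bound (-x) (hmem (Ico_subset_Icc_self hx)))
    (-a) (right_mem_Icc.mpr (neg_le_neg hab))
  simpa [intervalIntegral.integral_comp_neg] using h

theorem eq_zero_of_norm_deriv_le_of_tendsto_zero {f f' : ℝ → E} {m : ℝ → ℝ}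
    (hf : ∀ x, HasDerivAt f (f' x) x) (hm : Continuous m) (hm_int : IntegrableAtFilter m atTop)
    (bound : ∀ x, ‖f' x‖ ≤ m x * ‖f x‖) (hlim : Tendsto f atTop (𝓝 0)) : f = 0 := by
  funext x
  have hint : IntegrableOn m (Ioi x) :=
    (integrableOn_Ici_iff_integrableAtFilter_atTop.mpr
      ⟨hm_int, hm.locallyIntegrable.locallyIntegrableOn _⟩).mono_set Ioi_subset_Ici_self
  have hrhs : Tendsto (fun b => ‖f b‖ * Real.exp (∫ t in x..b, m t)) atTop (𝓝 0) := by
    simpa using hlim.norm.mul (intervalIntegral_tendsto_integral_Ioi x hint tendsto_id).rexp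
  have hle : ‖f x‖ ≤ 0 := ge_of_tendsto hrhs <| (eventually_ge_atTop x).mono fun b hb =>
    norm_le_norm_mul_exp_integral_of_norm_deriv_le_backward hb (fun y _ => hf y) hm
      fun y _ => bound y
  exact norm_le_zero_iff.mp hle

end Gronwall

section PhaseRotation

variable {A : Type*} [NormedRing A] [NormedAlgebra ℝ A]

/-- The one-parameter group `e^{tJ}` generated by an element `J` with `J² = -1`, given by Euler's
formula so that neither completeness nor the exponential series is involved. With `J = iΓ¹` it is
the group `e^{iΓ¹t}` of the free equation. -/
def phaseRotation (J : A) (t : ℝ) : A := Real.cos t • 1 + Real.sin t • J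

theorem norm_phaseRotation_le (J : A) (t : ℝ) : ‖phaseRotation J t‖ ≤ ‖(1 : A)‖ + ‖J‖ :=
  calc ‖phaseRotation J t‖ ≤ |Real.cos t| * ‖(1 : A)‖ + |Real.sin t| * ‖J‖ := by
        simpa only [phaseRotation, norm_smul, Real.norm_eq_abs] using
          norm_add_le (Real.cos t • (1 : A)) (Real.sin t • J)
    _ ≤ 1 * ‖(1 : A)‖ + 1 * ‖J‖ := by
        gcongr
        exacts [Real.abs_cos_le_one t, Real.abs_sin_le_one t]
    _ = ‖(1 : A)‖ + ‖J‖ := by simp only [one_mul]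

theorem phaseRotation_mul_phaseRotation_neg {J : A} (hJ : J * J = -1) (t : ℝ) :
    phaseRotation J t * phaseRotation J (-t) = 1 := by
  have hpyth : (Real.cos t * Real.cos t + Real.sin t * Real.sin t) • (1 : A) = 1 := by
    rw [← sq, ← sq, Real.cos_sq_add_sin_sq, one_smul]
  rw [← hpyth]
  simp only [phaseRotation, Real.cos_neg, Real.sin_neg, add_mul, mul_add, smul_mul_smul_comm,
    one_mul, mul_one, hJ]
  module

theorem hasDerivAt_phaseRotation {J : A} (hJ : J * J = -1) (t : ℝ) :
    HasDerivAt (phaseRotation J) (phaseRotation J t * J) t := by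
  have h := ((Real.hasDerivAt_cos t).smul_const (1 : A)).add
    ((Real.hasDerivAt_sin t).smul_const J)
  refine h.congr_deriv ?_
  simp only [phaseRotation, add_mul, smul_mul_assoc, one_mul, hJ]
  module

end PhaseRotation

section ComplexStructure

variable {E : Type*} [NormedAddCommGroup E] [NormedSpace ℝ E] {J : E →L[ℝ] E}

theorem phaseRotation_apply_phaseRotation_neg_apply (hJ : J * J = -1) (t : ℝ) (v : E) :
    phaseRotation J t (phaseRotation J (-t) v) = v :=
  congrArg (fun T : E →L[ℝ] E => T v) (phaseRotation_mul_phaseRotation_neg hJ t)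

theorem hasDerivAt_phaseRotation_neg_mul_apply (hJ : J * J = -1) {u : ℝ → E} {u' : E} {x : ℝ}
    (lam : ℝ) (hu : HasDerivAt u u' x) :
    HasDerivAt (fun y => phaseRotation J (-(lam * y)) (u y))
      (phaseRotation J (-(lam * x)) (u' - lam • J (u x))) x := by
  have hphase : HasDerivAt (fun y => -(lam * y)) (-lam) x := by
    simpa only [mul_one] using ((hasDerivAt_id' x).const_mul lam).fun_neg
  have h := ((hasDerivAt_phaseRotation hJ _).scomp x hphase).clm_apply hu
  refine h.congr_deriv ?_
  simp only [smul_apply, mul_apply_eq_comp, Function.comp_apply, map_sub, map_smul]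
  module

theorem eq_zero_of_norm_deriv_sub_smul_le_of_tendsto_zero (hJ : J * J = -1) (lam : ℝ)
    {u u' : ℝ → E} {m : ℝ → ℝ} (hu : ∀ x, HasDerivAt u (u' x) x) (hm : Continuous m)
    (hm_int : IntegrableAtFilter m atTop)
    (bound : ∀ x, ‖u' x - lam • J (u x)‖ ≤ m x * ‖u x‖) (hlim : Tendsto u atTop (𝓝 0)) :
    u = 0 := by
  let w (x : ℝ) : E := phaseRotation J (-(lam * x)) (u x)
  let K : ℝ := ‖(1 : E →L[ℝ] E)‖ + ‖J‖
  have hK (t : ℝ) (v : E) : ‖phaseRotation J t v‖ ≤ K * ‖v‖ :=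
    ContinuousLinearMap.le_of_opNorm_le _ (norm_phaseRotation_le J t) v
  have hu_eq (x : ℝ) : phaseRotation J (lam * x) (w x) = u x :=
    phaseRotation_apply_phaseRotation_neg_apply hJ (lam * x) (u x)
  have hw_lim : Tendsto w atTop (𝓝 0) :=
    squeeze_zero_norm (fun x => hK _ (u x)) (by simpa using hlim.norm.const_mul K)
  have hw_bound (x : ℝ) :
      ‖phaseRotation J (-(lam * x)) (u' x - lam • J (u x))‖ ≤ K * K * |m x| * ‖w x‖ :=
    calc ‖phaseRotation J (-(lam * x)) (u' x - lam • J (u x))‖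
        ≤ K * ‖u' x - lam • J (u x)‖ := hK _ _
      _ ≤ K * (|m x| * ‖u x‖) := by
        gcongr
        exact (bound x).trans (by gcongr; exact le_abs_self _)
      _ = K * (|m x| * ‖phaseRotation J (lam * x) (w x)‖) := by rw [hu_eq]
      _ ≤ K * (|m x| * (K * ‖w x‖)) := by gcongr; exact hK _ _
      _ = K * K * |m x| * ‖w x‖ := by ring
  have hw : w = 0 := eq_zero_of_norm_deriv_le_of_tendsto_zero
    (fun x => hasDerivAt_phaseRotation_neg_mul_apply hJ lam (hu x)) (by fun_prop)
    (hm_int.norm.smul (K * K)) hw_bound hw_lim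
  funext x
  simpa only [hw, Pi.zero_apply, map_zero] using (hu_eq x).symm

end ComplexStructure

theorem eigenfunction_vanishes_general {E : Type*} [NormedAddCommGroup E] [NormedSpace ℂ E]
    {Γ : E →L[ℂ] E} (hΓ : Γ * Γ = 1) {lam : ℝ} {M : ℝ → E →L[ℂ] E} (hM : Continuous M)
    (hM_int : IntegrableAtFilter (fun x => ‖M x‖) atTop) {u : ℝ → E} (hu : Differentiable ℝ u)
    (heq : ∀ x, (-Complex.I) • Γ (deriv u x) + M x (u x) = (lam : ℂ) • u x)
    (hlim : Tendsto u atTop (𝓝 0)) : u = 0 := by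
  have hΓΓ (v : E) : Γ (Γ v) = v := congrArg (fun T : E →L[ℂ] E => T v) hΓ
  let J : E →L[ℝ] E := (Complex.I • Γ).restrictScalars ℝ
  have hJ : J * J = -1 := by
    ext v
    simp [J, hΓΓ, smul_smul]
  have hderiv (x : ℝ) : deriv u x = lam • J (u x) - J (M x (u x)) :=
    calc deriv u x = J ((-Complex.I) • Γ (deriv u x)) := by simp [J, hΓΓ, smul_smul]
      _ = J ((lam : ℂ) • u x - M x (u x)) := by rw [← heq x, add_sub_cancel_right]
      _ = lam • J (u x) - J (M x (u x)) := by rw [map_sub, Complex.coe_smul, map_smul]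
  refine eq_zero_of_norm_deriv_sub_smul_le_of_tendsto_zero hJ lam (fun x => (hu x).hasDerivAt)
    (hM.norm.const_mul ‖J‖) (hM_int.smul ‖J‖) (fun x => ?_) hlim
  calc ‖deriv u x - lam • J (u x)‖ = ‖J (M x (u x))‖ := by
        rw [hderiv, sub_sub_cancel_left, norm_neg]
    _ ≤ ‖J‖ * (‖M x‖ * ‖u x‖) := J.le_opNorm_of_le ((M x).le_opNorm (u x))
    _ = ‖J‖ * ‖M x‖ * ‖u x‖ := (mul_assoc _ _ _).symm

/-- the Grönwall-type rigidity result.  If `Γ¹` is a Hermitian matrix with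
`(Γ¹)² = I`, `M : ℝ → M₄(ℂ)` is continuous with `∫ₐ^∞ ‖M(x)‖ dx < ∞`, and a `C¹` function
`u : ℝ → ℂ⁴` satisfies `−iΓ¹u'(x) + M(x)u(x) = λ u(x)` for all `x` and `u(x) → 0` as
`x → +∞`, then `u ≡ 0`. -/
theorem eigenfunction_vanishes
    (Γ1 : Matrix (Fin 4) (Fin 4) ℂ) (hΓ1_herm : Γ1.IsHermitian) (hΓ1_sq : Γ1 * Γ1 = 1)
    (lam : ℝ)
    (M : ℝ → Matrix (Fin 4) (Fin 4) ℂ)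
    (hM_cont : Continuous fun x => Mop (M x))
    (a : ℝ) (hM_int : IntegrableOn (fun x => ‖Mop (M x)‖) (Set.Ici a))
    (u : ℝ → V4) (hu : ContDiff ℝ 1 u)
    (heq : ∀ x : ℝ, (-Complex.I) • Mop Γ1 (deriv u x) + Mop (M x) (u x) = (lam : ℂ) • u x)
    (hlim : Filter.Tendsto u Filter.atTop (nhds 0)) :
    u = 0 := by
  have hΓ : Mop Γ1 * Mop Γ1 = 1 := by rw [Mop, ← map_mul, hΓ1_sq, map_one]
  exact eigenfunction_vanishes_general hΓ hM_cont ⟨_, Filter.Ici_mem_atTop a, hM_int⟩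
    (hu.differentiable one_ne_zero) heq hlim
end
end

section
/- For every u in the Schwartz space 𝒮(ℝ, ℂ⁴) and every λ ≥ 1, one has ‖H₀u‖ ≤ (2 + ‖f‖_∞)·⟨Nu, u⟩^{1/2}, and consequently ‖H₀u‖ ≤ (2 + ‖f‖_∞)·‖Nu‖. -/
noncomputable section

open MeasureTheory

/-- The `L²` inner product `⟨u, v⟩ = ∫ ⟨u(x), v(x)⟩ dx` (conjugate-linear in the first slot). -/
def L2inner (u v : ℝ → V4) : ℂ := ∫ x : ℝ, (inner ℂ (u x) (v x) : ℂ)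

/-- The `L²` norm `‖u‖ = (∫ ‖u(x)‖² dx)^{1/2}`. -/
def L2norm (u : ℝ → V4) : ℝ := Real.sqrt (∫ x : ℝ, ‖u x‖ ^ 2)

/-- The operator `D = −i d/dx`. -/
def Dop (u : ℝ → V4) : ℝ → V4 := fun x => (-Complex.I) • deriv u x

/-- The per-mode free Dirac Hamiltonian `H₀u = Γ¹Du + λgΓ²u + fu`. -/
def H0op (Γ1 Γ2 : Matrix (Fin 4) (Fin 4) ℂ) (g f : ℝ → ℝ) (lam : ℝ) (u : ℝ → V4) : ℝ → V4 :=
  fun x => Mop Γ1 (Dop u x) + (lam * g x) • Mop Γ2 (u x) + f x • u x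

/-- The operator `Qu = −u'' + λ²g²u`. -/
def Qop (g : ℝ → ℝ) (lam : ℝ) (u : ℝ → V4) : ℝ → V4 :=
  fun x => -(deriv (deriv u) x) + (lam ^ 2 * g x ^ 2) • u x

/-- The comparison operator `Nu = Qu + (1 + x²)u`. -/
def Nop (g : ℝ → ℝ) (lam : ℝ) (u : ℝ → V4) : ℝ → V4 :=
  fun x => Qop g lam u x + (1 + x ^ 2) • u x

/-!
On Schwartz functions the quadratic form of `N` is a sum of squares,
`⟨Nu, u⟩ = ‖u'‖² + ‖λgu‖² + ‖u‖² + ‖xu‖²`, so `‖u'‖`, `‖λgu‖` and `‖u‖` are each at most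
`⟨Nu, u⟩^{1/2}`. As `Γ¹` and `Γ²` are contractions, the three terms of `H₀u` contribute
`1`, `1` and `‖f‖_∞` to the constant. In particular `N ≥ 1`, and Cauchy–Schwarz gives
`⟨Nu, u⟩ ≤ ‖Nu‖‖u‖ ≤ ‖Nu‖⟨Nu, u⟩^{1/2}`, that is, `⟨Nu, u⟩^{1/2} ≤ ‖Nu‖`.
-/

section Schwartz

variable {E : Type*} [NormedAddCommGroup E] [NormedSpace ℝ E]

theorem memLp_deriv (u : SchwartzMap ℝ E) (p : ENNReal) : MemLp (deriv u) p :=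
  (SchwartzMap.derivCLM ℝ E u).memLp p volume

theorem memLp_deriv_deriv (u : SchwartzMap ℝ E) (p : ENNReal) : MemLp (deriv (deriv u)) p :=
  memLp_deriv (SchwartzMap.derivCLM ℝ E u) p

theorem memLp_smul_of_hasTemperateGrowth {w : ℝ → ℝ} (hw : w.HasTemperateGrowth)
    (u : SchwartzMap ℝ E) (p : ENNReal) : MemLp (fun x ↦ w x • u x) p := by
  simpa only [SchwartzMap.smulLeftCLM_apply hw, Pi.smul_def'] using
    (SchwartzMap.smulLeftCLM E w u).memLp p volume

theorem memLp_sq_smul (u : SchwartzMap ℝ E) (p : ENNReal) : MemLp (fun x : ℝ ↦ x ^ 2 • u x) p :=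
  memLp_smul_of_hasTemperateGrowth (by fun_prop) u p

end Schwartz

section InnerProductSpace

variable {𝕜 E : Type*} [RCLike 𝕜] [NormedAddCommGroup E] [InnerProductSpace 𝕜 E]

theorem integrable_inner_of_memLp {α : Type*} [MeasurableSpace α] {μ : Measure α} {u v : α → E}
    (hu : MemLp u 2 μ) (hv : MemLp v 2 μ) : Integrable (fun x ↦ inner 𝕜 (u x) (v x)) μ := by
  refine (L2.integrable_inner (𝕜 := 𝕜) (hu.toLp u) (hv.toLp v)).congr ?_
  filter_upwards [hu.coeFn_toLp, hv.coeFn_toLp] with x hux hvx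
  rw [hux, hvx]

theorem integral_inner_deriv_left_eq_neg_right [NormedSpace ℝ E] (u v : SchwartzMap ℝ E) :
    ∫ x, inner 𝕜 (deriv u x) (v x) = -∫ x, inner 𝕜 (u x) (deriv v x) := by
  have hu'v := integrable_inner_of_memLp (𝕜 := 𝕜) (memLp_deriv u 2) (v.memLp 2)
  have huv' := integrable_inner_of_memLp (𝕜 := 𝕜) (u.memLp 2) (memLp_deriv v 2)
  have hsum : ∫ x, (inner 𝕜 (u x) (deriv v x) + inner 𝕜 (deriv u x) (v x)) = 0 :=
    integral_eq_zero_of_hasDerivAt_of_integrable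
      (fun x ↦ (u.hasDerivAt x).inner 𝕜 (v.hasDerivAt x)) (huv'.add hu'v)
      (integrable_inner_of_memLp (u.memLp 2) (v.memLp 2))
  rw [integral_add huv' hu'v, add_comm] at hsum
  exact eq_neg_of_add_eq_zero_left hsum

end InnerProductSpace

section NormedSpace

variable {α E : Type*} [MeasurableSpace α] {μ : Measure α} [NormedAddCommGroup E]
  [NormedSpace ℝ E] {p : ENNReal} {w : α → ℝ} {u : α → E}

theorem memLp_smul_of_ae_abs_le {C : ℝ} (hw : AEStronglyMeasurable w μ)
    (hwC : ∀ᵐ x ∂μ, |w x| ≤ C) (hu : MemLp u p μ) : MemLp (fun x ↦ w x • u x) p μ := by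
  refine hu.of_le_mul (c := C) (hw.smul hu.1) ?_
  filter_upwards [hwC] with x hx
  rw [norm_smul, Real.norm_eq_abs]
  gcongr

theorem memLp_smul_of_memLp_sq_smul (hw : AEStronglyMeasurable w μ) (hu : MemLp u p μ)
    (hwu : MemLp (fun x ↦ w x ^ 2 • u x) p μ) : MemLp (fun x ↦ w x • u x) p μ := by
  refine (hu.norm.add hwu.norm).mono' (hw.smul hu.1) (.of_forall fun x ↦ ?_)
  have hw_le : |w x| ≤ 1 + w x ^ 2 := by nlinarith [sq_abs (w x), sq_nonneg (|w x| - 1)]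
  calc ‖w x • u x‖ = |w x| * ‖u x‖ := by rw [norm_smul, Real.norm_eq_abs]
    _ ≤ (1 + w x ^ 2) * ‖u x‖ := by gcongr
    _ = ‖u x‖ + ‖w x ^ 2 • u x‖ := by
      rw [norm_smul, Real.norm_of_nonneg (sq_nonneg _), one_add_mul]

end NormedSpace

section L2

variable {u v w : ℝ → V4}

theorem L2norm_nonneg (u : ℝ → V4) : 0 ≤ L2norm u := Real.sqrt_nonneg _

theorem L2norm_sq (u : ℝ → V4) : L2norm u ^ 2 = ∫ x, ‖u x‖ ^ 2 :=
  Real.sq_sqrt (integral_nonneg fun _ ↦ sq_nonneg _)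

theorem L2inner_self (u : ℝ → V4) : L2inner u u = ((L2norm u ^ 2 : ℝ) : ℂ) := by
  rw [L2norm_sq, ← integral_complex_ofReal]
  simp only [L2inner, inner_self_eq_norm_sq_to_K, Complex.coe_algebraMap, Complex.ofReal_pow]

theorem L2inner_sq_smul_self (r : ℝ → ℝ) (u : ℝ → V4) :
    L2inner (fun x ↦ r x ^ 2 • u x) u = ((L2norm (fun x ↦ r x • u x) ^ 2 : ℝ) : ℂ) := by
  rw [← L2inner_self]
  simp only [L2inner, sq, mul_smul, inner_smul_left_eq_smul, inner_smul_right_eq_smul]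

theorem L2inner_eq_inner_toLp (hu : MemLp u 2) (hv : MemLp v 2) :
    L2inner u v = inner ℂ (hu.toLp u) (hv.toLp v) := by
  rw [L2.inner_def]
  refine integral_congr_ae ?_
  filter_upwards [hu.coeFn_toLp, hv.coeFn_toLp] with x hux hvx
  rw [hux, hvx]

theorem L2norm_eq_norm_toLp (hu : MemLp u 2) : L2norm u = ‖hu.toLp u‖ := by
  have hsq : ((L2norm u ^ 2 : ℝ) : ℂ) = ((‖hu.toLp u‖ ^ 2 : ℝ) : ℂ) := by
    rw [← L2inner_self, L2inner_eq_inner_toLp hu hu, inner_self_eq_norm_sq_to_K]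
    norm_cast
  exact (sq_eq_sq₀ (L2norm_nonneg u) (norm_nonneg _)).mp (Complex.ofReal_injective hsq)

theorem L2inner_add_left (hu : MemLp u 2) (hv : MemLp v 2) (hw : MemLp w 2) :
    L2inner (u + v) w = L2inner u w + L2inner v w := by
  rw [L2inner_eq_inner_toLp (hu.add hv) hw, MemLp.toLp_add hu hv, inner_add_left,
    ← L2inner_eq_inner_toLp hu hw, ← L2inner_eq_inner_toLp hv hw]

theorem L2norm_add_le (hu : MemLp u 2) (hv : MemLp v 2) :
    L2norm (u + v) ≤ L2norm u + L2norm v := by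
  rw [L2norm_eq_norm_toLp hu, L2norm_eq_norm_toLp hv, L2norm_eq_norm_toLp (hu.add hv),
    MemLp.toLp_add]
  exact norm_add_le _ _

theorem re_L2inner_le_mul_L2norm (hu : MemLp u 2) (hv : MemLp v 2) :
    (L2inner u v).re ≤ L2norm u * L2norm v := by
  rw [L2inner_eq_inner_toLp hu hv, L2norm_eq_norm_toLp hu, L2norm_eq_norm_toLp hv]
  exact re_inner_le_norm (𝕜 := ℂ) _ _

theorem L2norm_le_mul_of_ae_norm_le {c : ℝ} (hc : 0 ≤ c) (hv : MemLp v 2)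
    (h : ∀ᵐ x, ‖u x‖ ≤ c * ‖v x‖) : L2norm u ≤ c * L2norm v := by
  refine Real.sqrt_le_iff.mpr ⟨mul_nonneg hc (L2norm_nonneg v), ?_⟩
  rw [mul_pow, L2norm_sq, ← integral_const_mul]
  refine integral_mono_of_nonneg (.of_forall fun _ ↦ sq_nonneg _)
    ((hv.integrable_norm_pow two_ne_zero).const_mul _) ?_
  filter_upwards [h] with x hx
  rw [← mul_pow]
  gcongr

theorem L2inner_neg_deriv_deriv_self (u : SchwartzMap ℝ V4) :
    L2inner (-deriv (deriv u)) u = ((L2norm (deriv u) ^ 2 : ℝ) : ℂ) := by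
  rw [← L2inner_self]
  simp only [L2inner, Pi.neg_apply, inner_neg_left, integral_neg]
  exact neg_eq_iff_eq_neg.mpr
    (integral_inner_deriv_left_eq_neg_right (SchwartzMap.derivCLM ℝ V4 u) u)

end L2

theorem norm_Mop_of_isHermitian_of_sq_eq_one {A : Matrix (Fin 4) (Fin 4) ℂ} (hA : A.IsHermitian)
    (hA_sq : A * A = 1) : ‖Mop A‖ = 1 := by
  have hA_star : star A = A := hA
  have hA_unitary : A ∈ unitary (Matrix (Fin 4) (Fin 4) ℂ) := by
    rw [Unitary.mem_iff, hA_star]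
    exact ⟨hA_sq, hA_sq⟩
  exact CStarRing.norm_of_mem_unitary (Unitary.map_mem Matrix.toEuclideanCLM hA_unitary)

section Dirac

variable {Γ1 Γ2 : Matrix (Fin 4) (Fin 4) ℂ} {g f : ℝ → ℝ} {lam Mf : ℝ}

theorem L2norm_H0op_le {u : ℝ → V4} (hΓ1 : ‖Mop Γ1‖ ≤ 1) (hΓ2 : ‖Mop Γ2‖ ≤ 1)
    (hf : AEStronglyMeasurable f) (hf_bdd : ∀ᵐ x, |f x| ≤ Mf) (hu : MemLp u 2)
    (hu' : MemLp (deriv u) 2) (hgu : MemLp (fun x ↦ (lam * g x) • u x) 2) :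
    L2norm (H0op Γ1 Γ2 g f lam u) ≤
      L2norm (deriv u) + L2norm (fun x ↦ (lam * g x) • u x) + Mf * L2norm u := by
  have hMf : 0 ≤ Mf := hf_bdd.exists.elim fun _ ↦ (abs_nonneg _).trans
  set kinetic : ℝ → V4 := fun x ↦ Mop Γ1 (Dop u x)
  set angular : ℝ → V4 := fun x ↦ (lam * g x) • Mop Γ2 (u x)
  set potential : ℝ → V4 := fun x ↦ f x • u x
  have hkinetic : MemLp kinetic 2 := (Mop Γ1).comp_memLp' (hu'.const_smul (-Complex.I))
  have hangular : MemLp angular 2 := by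
    have : angular = Mop Γ2 ∘ fun x ↦ (lam * g x) • u x := by
      ext1 x
      exact ((Mop Γ2).map_smul_of_tower _ _).symm
    exact this ▸ (Mop Γ2).comp_memLp' hgu
  have hpotential : MemLp potential 2 := memLp_smul_of_ae_abs_le hf hf_bdd hu
  calc L2norm (kinetic + angular + potential)
      ≤ L2norm kinetic + L2norm angular + L2norm potential :=
        (L2norm_add_le (hkinetic.add hangular) hpotential).trans
          (add_le_add_left (L2norm_add_le hkinetic hangular) _)
    _ ≤ 1 * L2norm (deriv u) + 1 * L2norm (fun x ↦ (lam * g x) • u x) + Mf * L2norm u := by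
        gcongr
        · refine L2norm_le_mul_of_ae_norm_le zero_le_one hu' (.of_forall fun x ↦ ?_)
          simpa [kinetic, Dop, norm_smul] using (Mop Γ1).le_of_opNorm_le hΓ1 (Dop u x)
        · refine L2norm_le_mul_of_ae_norm_le zero_le_one hgu (.of_forall fun x ↦ ?_)
          rw [norm_smul, norm_smul, mul_left_comm]
          gcongr
          exact (Mop Γ2).le_of_opNorm_le hΓ2 (u x)
        · refine L2norm_le_mul_of_ae_norm_le hMf hu ?_
          filter_upwards [hf_bdd] with x hx
          rw [norm_smul, Real.norm_eq_abs]
          gcongr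
    _ = _ := by rw [one_mul, one_mul]

theorem Nop_eq_add (g : ℝ → ℝ) (lam : ℝ) (u : ℝ → V4) :
    Nop g lam u = -deriv (deriv u) + (fun x ↦ (lam * g x) ^ 2 • u x) + u +
      fun x ↦ x ^ 2 • u x := by
  ext1 x
  simp only [Nop, Qop, Pi.add_apply, Pi.neg_apply, mul_pow, add_smul, one_smul, add_assoc]

variable {u : SchwartzMap ℝ V4}

theorem memLp_Nop (hgu : MemLp (fun x ↦ (lam * g x) ^ 2 • u x) 2) : MemLp (Nop g lam u) 2 := by
  rw [Nop_eq_add]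
  exact (((memLp_deriv_deriv u 2).neg.add hgu).add (u.memLp 2)).add (memLp_sq_smul u 2)

theorem L2inner_Nop_self (hgu : MemLp (fun x ↦ (lam * g x) ^ 2 • u x) 2) :
    L2inner (Nop g lam u) u =
      ((L2norm (deriv u) ^ 2 + L2norm (fun x ↦ (lam * g x) • u x) ^ 2 + L2norm u ^ 2 +
        L2norm (fun x ↦ x • u x) ^ 2 : ℝ) : ℂ) := by
  have hu := u.memLp 2
  have hu'' := (memLp_deriv_deriv u 2).neg
  rw [Nop_eq_add, L2inner_add_left ((hu''.add hgu).add hu) (memLp_sq_smul u 2) hu,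
    L2inner_add_left (hu''.add hgu) hu hu, L2inner_add_left hu'' hgu hu,
    L2inner_neg_deriv_deriv_self, L2inner_sq_smul_self, L2inner_self, L2inner_sq_smul_self]
  simp only [Complex.ofReal_add]

theorem L2norm_le_sqrt_re_L2inner_Nop (hgu : MemLp (fun x ↦ (lam * g x) ^ 2 • u x) 2) :
    L2norm (deriv u) ≤ √(L2inner (Nop g lam u) u).re ∧
      L2norm (fun x ↦ (lam * g x) • u x) ≤ √(L2inner (Nop g lam u) u).re ∧
      L2norm u ≤ √(L2inner (Nop g lam u) u).re := by
  rw [L2inner_Nop_self hgu, Complex.ofReal_re]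
  have hderiv := sq_nonneg (L2norm (deriv u))
  have hangular := sq_nonneg (L2norm fun x ↦ (lam * g x) • u x)
  have hself := sq_nonneg (L2norm u)
  have hmoment := sq_nonneg (L2norm fun x ↦ x • u x)
  refine ⟨Real.le_sqrt_of_sq_le ?_, Real.le_sqrt_of_sq_le ?_, Real.le_sqrt_of_sq_le ?_⟩ <;>
    linarith

theorem sqrt_re_L2inner_Nop_le (hgu : MemLp (fun x ↦ (lam * g x) ^ 2 • u x) 2) :
    √(L2inner (Nop g lam u) u).re ≤ L2norm (Nop g lam u) := by
  set E := (L2inner (Nop g lam u) u).re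
  rcases (Real.sqrt_nonneg E).eq_or_lt with hE | hE
  · exact hE ▸ L2norm_nonneg _
  · refine le_of_mul_le_mul_right ?_ hE
    calc √E * √E = E := Real.mul_self_sqrt (Real.sqrt_pos.mp hE).le
      _ ≤ L2norm (Nop g lam u) * L2norm u := re_L2inner_le_mul_L2norm (memLp_Nop hgu) (u.memLp 2)
      _ ≤ L2norm (Nop g lam u) * √E :=
        mul_le_mul_of_nonneg_left (L2norm_le_sqrt_re_L2inner_Nop hgu).2.2 (L2norm_nonneg _)

theorem nelson_first_hypothesis_H0_general
    (Γ1 Γ2 : Matrix (Fin 4) (Fin 4) ℂ) (hΓ1 : ‖Mop Γ1‖ ≤ 1) (hΓ2 : ‖Mop Γ2‖ ≤ 1)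
    (g f : ℝ → ℝ) (hg : AEStronglyMeasurable g) (hf : AEStronglyMeasurable f)
    (Mf : ℝ) (hf_bdd : ∀ᵐ x, |f x| ≤ Mf)
    (u : SchwartzMap ℝ V4) (hgu : MemLp (fun x ↦ g x ^ 2 • u x) 2) (lam : ℝ) :
    L2norm (H0op Γ1 Γ2 g f lam u) ≤ (2 + Mf) * √(L2inner (Nop g lam u) u).re ∧
      L2norm (H0op Γ1 Γ2 g f lam u) ≤ (2 + Mf) * L2norm (Nop g lam u) := by
  have hMf : 0 ≤ Mf := hf_bdd.exists.elim fun _ ↦ (abs_nonneg _).trans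
  have hsq_smul : MemLp (fun x ↦ (lam * g x) ^ 2 • u x) 2 := by
    simpa only [mul_pow, mul_smul, Pi.smul_def] using hgu.const_smul (lam ^ 2)
  have hsmul : MemLp (fun x ↦ (lam * g x) • u x) 2 :=
    memLp_smul_of_memLp_sq_smul (hg.const_mul lam) (u.memLp 2) hsq_smul
  set E := (L2inner (Nop g lam u) u).re
  obtain ⟨hderiv, hangular, hself⟩ := L2norm_le_sqrt_re_L2inner_Nop hsq_smul
  have hform_bound : L2norm (H0op Γ1 Γ2 g f lam u) ≤ (2 + Mf) * √E :=
    calc L2norm (H0op Γ1 Γ2 g f lam u)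
        ≤ L2norm (deriv u) + L2norm (fun x ↦ (lam * g x) • u x) + Mf * L2norm u :=
          L2norm_H0op_le hΓ1 hΓ2 hf hf_bdd (u.memLp 2) (memLp_deriv u 2) hsmul
      _ ≤ √E + √E + Mf * √E := by gcongr
      _ = (2 + Mf) * √E := by ring
  refine ⟨hform_bound, hform_bound.trans ?_⟩
  gcongr
  exact sqrt_re_L2inner_Nop_le hsq_smul

end Dirac

/-- first Nelson hypothesis for `(H₀, N)`: for every Schwartz `u` and every
`λ ≥ 1`, `‖H₀u‖ ≤ (2 + ‖f‖_∞)·⟨Nu, u⟩^{1/2}`, and consequently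
`‖H₀u‖ ≤ (2 + ‖f‖_∞)·‖Nu‖`. -/
theorem nelson_first_hypothesis_H0
    (Γ1 Γ2 : Matrix (Fin 4) (Fin 4) ℂ)
    (hΓ1_herm : Γ1.IsHermitian) (hΓ2_herm : Γ2.IsHermitian)
    (hΓ1_sq : Γ1 * Γ1 = 1) (hΓ2_sq : Γ2 * Γ2 = 1)
    (hanticomm : Γ1 * Γ2 + Γ2 * Γ1 = 0)
    (g : ℝ → ℝ) (hg_smooth : ContDiff ℝ (⊤ : ℕ∞) g) (Cb : ℝ) (hg_bdd : ∀ x : ℝ, |g x| ≤ Cb)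
    (Cg : ℝ) (hCg : 0 < Cg) (hg' : ∀ x : ℝ, |deriv g x| ≤ Cg * |g x|)
    (f : ℝ → ℝ) (hf_smooth : ContDiff ℝ (⊤ : ℕ∞) f)
    (Mf : ℝ) (hf_bdd : ∀ x : ℝ, |f x| ≤ Mf)
    (Mf' : ℝ) (hf'_bdd : ∀ x : ℝ, |deriv f x| ≤ Mf')
    (u : SchwartzMap ℝ V4) (lam : ℝ) (hlam : 1 ≤ lam) :
    L2norm (H0op Γ1 Γ2 g f lam ⇑u) ≤
      (2 + Mf) * Real.sqrt ((L2inner (Nop g lam ⇑u) ⇑u).re) ∧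
    L2norm (H0op Γ1 Γ2 g f lam ⇑u) ≤ (2 + Mf) * L2norm (Nop g lam ⇑u) := by
  have hgu : MemLp (fun x ↦ g x ^ 2 • u x) 2 :=
    memLp_smul_of_ae_abs_le (hg_smooth.continuous.pow 2).aestronglyMeasurable
      (.of_forall fun x ↦ (abs_pow _ _).trans_le (pow_le_pow_left₀ (abs_nonneg _) (hg_bdd x) 2))
      (u.memLp 2)
  exact nelson_first_hypothesis_H0_general Γ1 Γ2
    (norm_Mop_of_isHermitian_of_sq_eq_one hΓ1_herm hΓ1_sq).le
    (norm_Mop_of_isHermitian_of_sq_eq_one hΓ2_herm hΓ2_sq).le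
    g f hg_smooth.continuous.aestronglyMeasurable hf_smooth.continuous.aestronglyMeasurable
    Mf (.of_forall hf_bdd) u hgu lam
end
end

section
/- There is a constant d > 0, depending only on C_g and ‖f'‖_∞ (one may take d = 2(1 + ‖f'‖_∞ + 2C_g)), such that for every u in the Schwartz space 𝒮(ℝ, ℂ⁴) and every λ ≥ 1: |⟨Nu, H₀u⟩ − ⟨H₀u, Nu⟩| ≤ d·⟨Nu, u⟩. -/
/-! Write `H = A D + Φ` and `N = D² + W`, with `A = Γ¹`, `Φ = λgΓ² + f` and
`W = λ²g² + 1 + x²`. When `⟨Nu, Hu⟩ - ⟨Hu, Nu⟩` is integrated by parts, every contribution in which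
no coefficient is differentiated cancels, because `A` and `Φ` are symmetric and `A` is constant.
There remains `⟨u', Φ'u⟩ - ⟨u, Φ'u'⟩ + i⟨u, W'Au⟩`. The assumption `|g'| ≤ C_g|g|` bounds `‖Φ'‖` by
`‖f'‖_∞ + C_g|λg|` and `|W'|` by `2C_gλ²g² + 1 + x²`, so this integrand is pointwise at most a
multiple, independent of `λ`, of the energy density `‖u'‖² + W‖u‖²`, whose integral is `⟨Nu, u⟩`. -/

noncomputable section

open MeasureTheory

open scoped InnerProductSpace SchwartzMap Asymptotics

section SlowlyIncreasing

variable {F G : Type*} [NormedAddCommGroup F] [NormedAddCommGroup G]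

/-- Slowly increasing functions in the sense of Schwartz: continuous and dominated by a polynomial.
The filter `⊤` makes the domination hold on all of `ℝ`, not just near infinity. -/
structure SlowlyIncreasing (S : ℝ → F) : Prop where
  continuous : Continuous S
  isBigO : ∃ k : ℕ, S =O[⊤] fun x : ℝ => (1 + |x|) ^ k

namespace SlowlyIncreasing

lemma of_isBigO {S : ℝ → F} {T : ℝ → G} (hT : SlowlyIncreasing T) (hS : Continuous S)
    (h : S =O[⊤] T) : SlowlyIncreasing S :=
  ⟨hS, hT.isBigO.imp fun _ hk => h.trans hk⟩

lemma of_norm_le {S : ℝ → F} {p : ℝ → ℝ} (hp : SlowlyIncreasing p) (hS : Continuous S)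
    (h : ∀ x, ‖S x‖ ≤ p x) : SlowlyIncreasing S :=
  hp.of_isBigO hS (.of_bound' (.of_forall fun x => (h x).trans (le_abs_self _)))

lemma const (c : F) : SlowlyIncreasing fun _ : ℝ => c :=
  ⟨continuous_const, 0, by
    simpa only [pow_zero] using Asymptotics.isBigO_const_const c one_ne_zero ⊤⟩

lemma id : SlowlyIncreasing fun x : ℝ => x :=
  ⟨continuous_id, 1, .of_bound' (.of_forall fun x => by
    rw [pow_one, Real.norm_eq_abs, Real.norm_eq_abs]
    exact (le_add_of_nonneg_left zero_le_one).trans (le_abs_self _))⟩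

lemma abs {p : ℝ → ℝ} (hp : SlowlyIncreasing p) : SlowlyIncreasing fun x => |p x| :=
  hp.of_isBigO hp.continuous.abs (Asymptotics.isBigO_refl p ⊤).norm_left

lemma add {S T : ℝ → F} (hS : SlowlyIncreasing S) (hT : SlowlyIncreasing T) :
    SlowlyIncreasing fun x => S x + T x := by
  obtain ⟨hSc, k, hk⟩ := hS
  obtain ⟨hTc, l, hl⟩ := hT
  have pow_isBigO {m n : ℕ} (hmn : m ≤ n) :
      (fun x : ℝ => (1 + |x|) ^ m) =O[⊤] fun x : ℝ => (1 + |x|) ^ n :=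
    .of_bound' (.of_forall fun x => by
      rw [norm_pow, norm_pow]
      exact pow_le_pow_right₀ ((le_add_of_nonneg_right (abs_nonneg x)).trans (le_abs_self _)) hmn)
  exact ⟨hSc.add hTc, max k l, (hk.trans (pow_isBigO (le_max_left k l))).add
    (hl.trans (pow_isBigO (le_max_right k l)))⟩

variable [NormedSpace ℝ F]

lemma smul {p : ℝ → ℝ} {S : ℝ → F} (hp : SlowlyIncreasing p) (hS : SlowlyIncreasing S) :
    SlowlyIncreasing fun x => p x • S x := by
  obtain ⟨hpc, k, hk⟩ := hp
  obtain ⟨hSc, l, hl⟩ := hS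
  refine ⟨hpc.smul hSc, k + l, ?_⟩
  simpa only [smul_eq_mul, ← pow_add] using hk.smul hl

lemma mul {p q : ℝ → ℝ} (hp : SlowlyIncreasing p) (hq : SlowlyIncreasing q) :
    SlowlyIncreasing fun x => p x * q x :=
  hp.smul hq

lemma of_deriv {S : ℝ → F} (hS : ContDiff ℝ 1 S) (hS' : SlowlyIncreasing (deriv S)) :
    SlowlyIncreasing S := by
  obtain ⟨k, hk⟩ := hS'.isBigO
  obtain ⟨C, hC⟩ := hk.bound
  simp only [Filter.eventually_top, norm_pow, Real.norm_eq_abs] at hC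
  have h_increment : (fun x => S x - S 0) =O[⊤] fun x : ℝ => (1 + |x|) ^ (k + 1) := by
    refine .of_bound |C| (.of_forall fun x => ?_)
    have h_deriv : ∀ y ∈ Metric.closedBall (0 : ℝ) |x|, ‖deriv S y‖ ≤ |C| * (1 + |x|) ^ k := by
      intro y hy
      have hyx : |y| ≤ |x| := by simpa using hy
      refine (hC y).trans ?_
      rw [abs_of_pos (by positivity : 0 < 1 + |y|)]
      gcongr
      exact le_abs_self C
    calc ‖S x - S 0‖ ≤ |C| * (1 + |x|) ^ k * ‖x - 0‖ :=
          (convex_closedBall (0 : ℝ) |x|).norm_image_sub_le_of_norm_deriv_le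
            (fun y _ => hS.differentiable one_ne_zero y) h_deriv (by simp) (by simp)
      _ ≤ |C| * (1 + |x|) ^ k * (1 + |x|) := by
          rw [sub_zero, Real.norm_eq_abs]
          gcongr
          exact le_add_of_nonneg_left zero_le_one
      _ = |C| * ‖(1 + |x|) ^ (k + 1)‖ := by
          rw [Real.norm_of_nonneg (by positivity), pow_succ, mul_assoc]
  have h_sub : SlowlyIncreasing fun x => S x - S 0 :=
    ⟨hS.continuous.sub continuous_const, k + 1, h_increment⟩
  simpa only [sub_add_cancel] using h_sub.add (.const (S 0))

lemma integrable_mul_norm {p : ℝ → ℝ} (hp : SlowlyIncreasing p) (v : 𝓢(ℝ, F)) :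
    Integrable fun x => p x * ‖v x‖ := by
  obtain ⟨hpc, k, hk⟩ := hp
  have h_pow : Integrable fun x : ℝ => (1 + |x|) ^ k * ‖v x‖ := by
    refine ((v.integrable.norm.add (v.integrable_pow_mul volume k)).const_mul
      (2 ^ (k - 1))).mono' (by fun_prop) (.of_forall fun x => ?_)
    rw [Real.norm_of_nonneg (by positivity)]
    calc (1 + |x|) ^ k * ‖v x‖ ≤ 2 ^ (k - 1) * (1 ^ k + |x| ^ k) * ‖v x‖ := by
          gcongr
          exact add_pow_le zero_le_one (abs_nonneg x) k
      _ = 2 ^ (k - 1) * (‖v x‖ + ‖x‖ ^ k * ‖v x‖) := by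
          rw [one_pow, Real.norm_eq_abs]
          ring
  obtain ⟨C, hC⟩ := (hk.mul (Asymptotics.isBigO_refl (fun x => ‖v x‖) ⊤)).bound
  rw [Filter.eventually_top] at hC
  exact (h_pow.norm.const_mul C).mono' (hpc.mul v.continuous.norm).aestronglyMeasurable
    (.of_forall hC)

end SlowlyIncreasing

end SlowlyIncreasing

section FormCommutator

variable {E : Type*} [NormedAddCommGroup E] [InnerProductSpace ℂ E]

/-- The first-order operator `A D + Φ` with `D = -i d/dx`, constant coefficient `A` and
operator-valued potential `Φ`; the Dirac Hamiltonian `H₀` has this form. -/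
def diracOp (A : E →L[ℂ] E) (Φ : ℝ → E →L[ℂ] E) (u : ℝ → E) : ℝ → E :=
  fun x => A ((-Complex.I) • deriv u x) + Φ x (u x)

/-- The Schrödinger operator `D² + W = -d²/dx² + W` with real potential `W`; the comparison operator
`N` has this form. -/
def schrodingerOp (W : ℝ → ℝ) (u : ℝ → E) : ℝ → E :=
  fun x => -(deriv (deriv u) x) + W x • u x

/-- The commutator `⟨Nu, Hu⟩ - ⟨Hu, Nu⟩` in the sense of quadratic forms, evaluated at `u`. It
avoids the compositions `NH` and `HN`, which would need more derivatives of the coefficients. -/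
def formCommutator (N H : (ℝ → E) → ℝ → E) (u : ℝ → E) : ℂ :=
  (∫ x, ⟪N u x, H u x⟫_ℂ) - ∫ x, ⟪H u x, N u x⟫_ℂ

/-- The `L²` matrix element `⟨v, S w⟩` of multiplication by the operator-valued function `S`. -/
def matrixElement (S : ℝ → E →L[ℂ] E) (v w : 𝓢(ℝ, E)) : ℂ := ∫ x, ⟪v x, S x (w x)⟫_ℂ

local notation:max "∂ₓ" v:max => SchwartzMap.derivCLM ℂ _ v

lemma SlowlyIncreasing.integrable_inner {S : ℝ → E →L[ℂ] E} (hS : SlowlyIncreasing S)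
    (v w : 𝓢(ℝ, E)) : Integrable fun x => ⟪v x, S x (w x)⟫_ℂ := by
  have h_norm : SlowlyIncreasing fun x => ‖S x‖ :=
    hS.of_isBigO hS.continuous.norm (Asymptotics.isBigO_refl S ⊤).norm_left
  refine ((h_norm.integrable_mul_norm w).const_mul (SchwartzMap.seminorm ℝ 0 0 v)).mono'
    (v.continuous.inner (hS.continuous.clm_apply w.continuous)).aestronglyMeasurable
    (.of_forall fun x => ?_)
  calc ‖⟪v x, S x (w x)⟫_ℂ‖ ≤ ‖v x‖ * ‖S x (w x)‖ := norm_inner_le_norm _ _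
    _ ≤ SchwartzMap.seminorm ℝ 0 0 v * (‖S x‖ * ‖w x‖) := by
        gcongr
        · exact v.norm_le_seminorm ℝ x
        · exact (S x).le_opNorm (w x)

lemma hasDerivAt_inner_clm_apply {S : ℝ → E →L[ℂ] E} {S' : E →L[ℂ] E} {v w : ℝ → E} {v' w' : E}
    {x : ℝ} (hv : HasDerivAt v v' x) (hS : HasDerivAt S S' x) (hw : HasDerivAt w w' x) :
    HasDerivAt (fun y => ⟪v y, S y (w y)⟫_ℂ)
      (⟪v', S x (w x)⟫_ℂ + ⟪v x, S' (w x)⟫_ℂ + ⟪v x, S x w'⟫_ℂ) x := by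
  have hSℝ := (ContinuousLinearMap.restrictScalarsL ℂ E E ℝ ℝ).hasFDerivAt.comp_hasDerivAt x hS
  have hSw : HasDerivAt (fun y => S y (w y)) (S' (w x) + S x w') x := hSℝ.clm_apply hw
  refine (hv.inner ℂ hSw).congr_deriv ?_
  rw [inner_add_right]
  ring

lemma matrixElement_deriv_add {S : ℝ → E →L[ℂ] E} (hS : ContDiff ℝ 1 S)
    (hS' : SlowlyIncreasing (deriv S)) (v w : 𝓢(ℝ, E)) :
    matrixElement S ∂ₓ v w + matrixElement (deriv S) v w + matrixElement S v ∂ₓ w = 0 := by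
  have hS₀ := SlowlyIncreasing.of_deriv hS hS'
  have h_left := hS₀.integrable_inner ∂ₓ v w
  have h_mid := hS'.integrable_inner v w
  have h_right := hS₀.integrable_inner v ∂ₓ w
  have h_total : ∫ x, (⟪∂ₓ v x, S x (w x)⟫_ℂ + ⟪v x, deriv S x (w x)⟫_ℂ
      + ⟪v x, S x (∂ₓ w x)⟫_ℂ) = 0 :=
    integral_eq_zero_of_hasDerivAt_of_integrable
      (fun x => hasDerivAt_inner_clm_apply (v.hasDerivAt x)
        (hS.differentiable one_ne_zero x).hasDerivAt (w.hasDerivAt x))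
      ((h_left.add h_mid).add h_right) (hS₀.integrable_inner v w)
  rwa [integral_add (by exact h_left.add h_mid) h_right, integral_add h_left h_mid] at h_total

lemma matrixElement_const_deriv_add (A : E →L[ℂ] E) (v w : 𝓢(ℝ, E)) :
    matrixElement (fun _ => A) ∂ₓ v w + matrixElement (fun _ => A) v ∂ₓ w = 0 := by
  have h_deriv : deriv (fun _ : ℝ => A) = fun _ => 0 := deriv_const' A
  have h := matrixElement_deriv_add contDiff_const (h_deriv ▸ .const 0) v w (S := fun _ => A)
  simpa [h_deriv, matrixElement] using h

section Expansion

variable {A : E →L[ℂ] E} {Φ : ℝ → E →L[ℂ] E} {W : ℝ → ℝ}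

lemma integral_inner_schrodingerOp_diracOp (A : E →L[ℂ] E) (hΦ : SlowlyIncreasing Φ)
    (hW : SlowlyIncreasing W) (u : 𝓢(ℝ, E)) :
    ∫ x, ⟪schrodingerOp W u x, diracOp A Φ u x⟫_ℂ =
      Complex.I * matrixElement (fun _ => A) ∂ₓ ∂ₓ u ∂ₓ u - matrixElement Φ ∂ₓ ∂ₓ u u
        - Complex.I * matrixElement (fun x => W x • A) u ∂ₓ u
        + matrixElement (fun x => W x • Φ x) u u := by
  have h_expand (x : ℝ) : ⟪schrodingerOp W u x, diracOp A Φ u x⟫_ℂ =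
      Complex.I * ⟪∂ₓ ∂ₓ u x, A (∂ₓ u x)⟫_ℂ - ⟪∂ₓ ∂ₓ u x, Φ x (u x)⟫_ℂ
        - Complex.I * ⟪u x, (W x • A) (∂ₓ u x)⟫_ℂ + ⟪u x, (W x • Φ x) (u x)⟫_ℂ := by
    change ⟪-(∂ₓ ∂ₓ u x) + W x • u x, A ((-Complex.I) • ∂ₓ u x) + Φ x (u x)⟫_ℂ = _
    simp only [map_smul, smul_apply, inner_add_left, inner_add_right, inner_neg_left,
      inner_smul_left_eq_smul, inner_smul_right_eq_smul, smul_eq_mul]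
    simp only [Complex.real_smul]
    ring
  have h_kinetic := (SlowlyIncreasing.const A).integrable_inner ∂ₓ ∂ₓ u ∂ₓ u
  have h_mixed := hΦ.integrable_inner ∂ₓ ∂ₓ u u
  have h_mixed' := (hW.smul (.const A)).integrable_inner u ∂ₓ u
  have h_potential := (hW.smul hΦ).integrable_inner u u
  simp only [h_expand]
  rw [integral_add _ h_potential, integral_sub _ (h_mixed'.const_mul _),
    integral_sub (h_kinetic.const_mul _) h_mixed, integral_const_mul, integral_const_mul]
  · rfl
  · exact (h_kinetic.const_mul _).sub h_mixed
  · exact ((h_kinetic.const_mul _).sub h_mixed).sub (h_mixed'.const_mul _)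

lemma integral_inner_diracOp_schrodingerOp (hA : (A : E →ₗ[ℂ] E).IsSymmetric)
    (hΦ : SlowlyIncreasing Φ) (hΦ_symm : ∀ x, (Φ x : E →ₗ[ℂ] E).IsSymmetric)
    (hW : SlowlyIncreasing W) (u : 𝓢(ℝ, E)) :
    ∫ x, ⟪diracOp A Φ u x, schrodingerOp W u x⟫_ℂ =
      -Complex.I * matrixElement (fun _ => A) ∂ₓ u ∂ₓ ∂ₓ u - matrixElement Φ u ∂ₓ ∂ₓ u
        + Complex.I * matrixElement (fun x => W x • A) ∂ₓ u u
        + matrixElement (fun x => W x • Φ x) u u := by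
  have h_expand (x : ℝ) : ⟪diracOp A Φ u x, schrodingerOp W u x⟫_ℂ =
      -Complex.I * ⟪∂ₓ u x, A (∂ₓ ∂ₓ u x)⟫_ℂ - ⟪u x, Φ x (∂ₓ ∂ₓ u x)⟫_ℂ
        + Complex.I * ⟪∂ₓ u x, (W x • A) (u x)⟫_ℂ + ⟪u x, (W x • Φ x) (u x)⟫_ℂ := by
    have hA_symm (a b : E) : ⟪A a, b⟫_ℂ = ⟪a, A b⟫_ℂ := hA a b
    have hΦx_symm (a b : E) : ⟪Φ x a, b⟫_ℂ = ⟪a, Φ x b⟫_ℂ := hΦ_symm x a b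
    change ⟪A ((-Complex.I) • ∂ₓ u x) + Φ x (u x), -(∂ₓ ∂ₓ u x) + W x • u x⟫_ℂ = _
    simp only [map_smul, smul_apply, inner_add_left, inner_add_right,
      inner_neg_right, inner_smul_left, inner_smul_right_eq_smul, map_neg, Complex.conj_I,
      hA_symm, hΦx_symm]
    simp only [Complex.real_smul]
    ring
  have h_kinetic := (SlowlyIncreasing.const A).integrable_inner ∂ₓ u ∂ₓ ∂ₓ u
  have h_mixed := hΦ.integrable_inner u ∂ₓ ∂ₓ u
  have h_mixed' := (hW.smul (.const A)).integrable_inner ∂ₓ u u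
  have h_potential := (hW.smul hΦ).integrable_inner u u
  simp only [h_expand]
  rw [integral_add _ h_potential, integral_add _ (h_mixed'.const_mul _),
    integral_sub (h_kinetic.const_mul _) h_mixed, integral_const_mul, integral_const_mul]
  · rfl
  · exact (h_kinetic.const_mul _).sub h_mixed
  · exact ((h_kinetic.const_mul _).sub h_mixed).add (h_mixed'.const_mul _)

theorem formCommutator_eq (hA : (A : E →ₗ[ℂ] E).IsSymmetric)
    (hΦ : ContDiff ℝ 1 Φ) (hΦ' : SlowlyIncreasing (deriv Φ))
    (hΦ_symm : ∀ x, (Φ x : E →ₗ[ℂ] E).IsSymmetric)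
    (hW : ContDiff ℝ 1 W) (hW' : SlowlyIncreasing (deriv W)) (u : 𝓢(ℝ, E)) :
    formCommutator (schrodingerOp W) (diracOp A Φ) u =
      matrixElement (deriv Φ) ∂ₓ u u - matrixElement (deriv Φ) u ∂ₓ u
        + Complex.I * matrixElement (fun x => deriv W x • A) u u := by
  have h_deriv_smul : deriv (fun x => W x • A) = fun x => deriv W x • A :=
    funext fun x => ((hW.differentiable one_ne_zero x).hasDerivAt.smul_const A).deriv
  have h_kinetic := matrixElement_const_deriv_add A ∂ₓ u ∂ₓ u
  have h_left := matrixElement_deriv_add hΦ hΦ' ∂ₓ u u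
  have h_right := matrixElement_deriv_add hΦ hΦ' u ∂ₓ u
  have h_mixed := matrixElement_deriv_add (S := fun x => W x • A) (hW.smul contDiff_const)
    (h_deriv_smul ▸ hW'.smul (.const A)) u u
  rw [h_deriv_smul] at h_mixed
  have hΦ₀ := SlowlyIncreasing.of_deriv hΦ hΦ'
  have hW₀ := SlowlyIncreasing.of_deriv hW hW'
  rw [formCommutator, integral_inner_schrodingerOp_diracOp A hΦ₀ hW₀,
    integral_inner_diracOp_schrodingerOp hA hΦ₀ hΦ_symm hW₀]
  linear_combination Complex.I * h_kinetic - h_left + h_right - Complex.I * h_mixed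

end Expansion

section Energy

variable {W : ℝ → ℝ}

/-- The energy density `‖u'‖² + W‖u‖²`, whose integral is the quadratic form of `D² + W`. -/
def energyDensity (W : ℝ → ℝ) (u : ℝ → E) (x : ℝ) : ℝ := ‖deriv u x‖ ^ 2 + W x * ‖u x‖ ^ 2

lemma ofReal_energyDensity (W : ℝ → ℝ) (u : 𝓢(ℝ, E)) (x : ℝ) :
    (energyDensity W u x : ℂ) =
      ⟪∂ₓ u x, (1 : E →L[ℂ] E) (∂ₓ u x)⟫_ℂ + ⟪u x, (W x • (1 : E →L[ℂ] E)) (u x)⟫_ℂ := by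
  simp only [energyDensity, one_apply_eq_self, smul_apply, inner_smul_right_eq_smul,
    inner_self_eq_norm_sq_to_K, SchwartzMap.derivCLM_apply, Complex.real_smul]
  push_cast
  rfl

lemma SlowlyIncreasing.integrable_energyDensity (hW : SlowlyIncreasing W) (u : 𝓢(ℝ, E)) :
    Integrable (energyDensity W u) := by
  have h_complex : Integrable fun x => (energyDensity W u x : ℂ) := by
    simp only [ofReal_energyDensity]
    exact ((SlowlyIncreasing.const 1).integrable_inner ∂ₓ u ∂ₓ u).add
      ((hW.smul (.const 1)).integrable_inner u u)
  exact h_complex.re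

lemma integral_inner_schrodingerOp_self (hW : SlowlyIncreasing W) (u : 𝓢(ℝ, E)) :
    ∫ x, ⟪schrodingerOp W u x, u x⟫_ℂ = ((∫ x, energyDensity W u x : ℝ) : ℂ) := by
  have h_expand (x : ℝ) : ⟪schrodingerOp W u x, u x⟫_ℂ =
      -⟪∂ₓ ∂ₓ u x, (1 : E →L[ℂ] E) (u x)⟫_ℂ + ⟪u x, (W x • (1 : E →L[ℂ] E)) (u x)⟫_ℂ := by
    change ⟪-(∂ₓ ∂ₓ u x) + W x • u x, u x⟫_ℂ = _
    simp only [inner_add_left, inner_neg_left, inner_smul_left_eq_smul, inner_smul_right_eq_smul,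
      one_apply_eq_self, smul_apply]
  have h_kinetic := (SlowlyIncreasing.const (1 : E →L[ℂ] E)).integrable_inner ∂ₓ u ∂ₓ u
  have h_kinetic' := (SlowlyIncreasing.const (1 : E →L[ℂ] E)).integrable_inner ∂ₓ ∂ₓ u u
  have h_potential := (hW.smul (.const (1 : E →L[ℂ] E))).integrable_inner u u
  have h_parts := matrixElement_const_deriv_add 1 ∂ₓ u u
  rw [← integral_complex_ofReal]
  simp only [h_expand, ofReal_energyDensity]
  rw [integral_add (by exact h_kinetic'.neg) h_potential, integral_add h_kinetic h_potential,
    integral_neg]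
  exact congrArg (· + _) (neg_eq_of_add_eq_zero_right h_parts)

end Energy

section Bound

variable {A T : E →L[ℂ] E}

lemma norm_inner_sub_inner_le {M K r : ℝ} (hM : 0 ≤ M) (hK : 0 ≤ K) (hT : ‖T‖ ≤ M + K * |r|)
    (a b : E) :
    ‖⟪b, T a⟫_ℂ - ⟪a, T b⟫_ℂ‖ ≤ (M + K) * ‖b‖ ^ 2 + (M + K * r ^ 2) * ‖a‖ ^ 2 := by
  have norm_inner_apply_le (c d : E) : ‖⟪c, T d⟫_ℂ‖ ≤ ‖T‖ * (‖c‖ * ‖d‖) :=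
    calc ‖⟪c, T d⟫_ℂ‖ ≤ ‖c‖ * ‖T d‖ := norm_inner_le_norm _ _
      _ ≤ ‖c‖ * (‖T‖ * ‖d‖) := by gcongr; exact T.le_opNorm d
      _ = ‖T‖ * (‖c‖ * ‖d‖) := by ring
  have h_amgm : 2 * (‖b‖ * ‖a‖) ≤ ‖b‖ ^ 2 + ‖a‖ ^ 2 := by
    linarith [two_mul_le_add_sq ‖b‖ ‖a‖]
  have h_amgm' : 2 * (‖b‖ * (|r| * ‖a‖)) ≤ ‖b‖ ^ 2 + r ^ 2 * ‖a‖ ^ 2 := by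
    rw [← sq_abs r, ← mul_pow]
    linarith [two_mul_le_add_sq ‖b‖ (|r| * ‖a‖)]
  calc ‖⟪b, T a⟫_ℂ - ⟪a, T b⟫_ℂ‖ ≤ ‖T‖ * (‖b‖ * ‖a‖) + ‖T‖ * (‖a‖ * ‖b‖) :=
        norm_sub_le_of_le (norm_inner_apply_le b a) (norm_inner_apply_le a b)
    _ = ‖T‖ * (2 * (‖b‖ * ‖a‖)) := by ring
    _ ≤ (M + K * |r|) * (2 * (‖b‖ * ‖a‖)) := by gcongr
    _ = M * (2 * (‖b‖ * ‖a‖)) + K * (2 * (‖b‖ * (|r| * ‖a‖))) := by ring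
    _ ≤ M * (‖b‖ ^ 2 + ‖a‖ ^ 2) + K * (‖b‖ ^ 2 + r ^ 2 * ‖a‖ ^ 2) := by gcongr
    _ = (M + K) * ‖b‖ ^ 2 + (M + K * r ^ 2) * ‖a‖ ^ 2 := by ring

lemma norm_inner_smul_apply_le (hA : ‖A‖ ≤ 1) (r : ℝ) (a : E) :
    ‖⟪a, (r • A) a⟫_ℂ‖ ≤ |r| * ‖a‖ ^ 2 :=
  calc ‖⟪a, (r • A) a⟫_ℂ‖ ≤ ‖a‖ * ‖(r • A) a‖ := norm_inner_le_norm _ _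
    _ = |r| * (‖a‖ * ‖A a‖) := by
        rw [smul_apply, norm_smul, Real.norm_eq_abs, mul_left_comm]
    _ ≤ |r| * (‖a‖ * ‖a‖) := by
        gcongr
        exact (A.le_of_opNorm_le hA a).trans_eq (one_mul _)
    _ = |r| * ‖a‖ ^ 2 := by rw [sq]

lemma norm_commutatorDensity_le {M K C r x s : ℝ} (hM : 0 ≤ M) (hK : 0 ≤ K) (hC : 0 ≤ C)
    (hA : ‖A‖ ≤ 1) (hT : ‖T‖ ≤ M + K * |r|) (hs : |s| ≤ 2 * C * r ^ 2 + (1 + x ^ 2)) (a b : E) :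
    ‖⟪b, T a⟫_ℂ - ⟪a, T b⟫_ℂ + Complex.I * ⟪a, (s • A) a⟫_ℂ‖ ≤
      (1 + M + K + 2 * C) * (‖b‖ ^ 2 + (r ^ 2 + (1 + x ^ 2)) * ‖a‖ ^ 2) := by
  have h_potential : ‖Complex.I * ⟪a, (s • A) a⟫_ℂ‖ ≤ (2 * C * r ^ 2 + (1 + x ^ 2)) * ‖a‖ ^ 2 := by
    rw [norm_mul, Complex.norm_I, one_mul]
    refine (norm_inner_smul_apply_le hA s a).trans ?_
    gcongr
  have h_slack : 0 ≤ (1 + 2 * C) * ‖b‖ ^ 2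
      + ((1 + M) * r ^ 2 + M * x ^ 2 + (K + 2 * C) * (1 + x ^ 2)) * ‖a‖ ^ 2 := by positivity
  calc ‖⟪b, T a⟫_ℂ - ⟪a, T b⟫_ℂ + Complex.I * ⟪a, (s • A) a⟫_ℂ‖
      ≤ ((M + K) * ‖b‖ ^ 2 + (M + K * r ^ 2) * ‖a‖ ^ 2)
        + (2 * C * r ^ 2 + (1 + x ^ 2)) * ‖a‖ ^ 2 :=
        norm_add_le_of_le (norm_inner_sub_inner_le hM hK hT a b) h_potential
    _ ≤ (1 + M + K + 2 * C) * (‖b‖ ^ 2 + (r ^ 2 + (1 + x ^ 2)) * ‖a‖ ^ 2) := by linarith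

end Bound

section ConfiningPotential

/-- The potential `w² + 1 + x²` of the comparison operator `N`, where `w = λg`. -/
def confiningPotential (w : ℝ → ℝ) (x : ℝ) : ℝ := w x ^ 2 + (1 + x ^ 2)

variable {w : ℝ → ℝ} {C : ℝ}

lemma abs_deriv_confiningPotential_le (hw : Differentiable ℝ w)
    (hw' : ∀ x, |deriv w x| ≤ C * |w x|) (x : ℝ) :
    |deriv (confiningPotential w) x| ≤ 2 * C * w x ^ 2 + (1 + x ^ 2) := by
  have h_deriv : deriv (confiningPotential w) x = 2 * (w x * deriv w x) + 2 * x := by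
    have h := ((hw x).hasDerivAt.pow 2).add (((hasDerivAt_id x).pow 2).const_add 1)
    refine (h.congr_deriv ?_).deriv
    simp only [Nat.cast_ofNat, id]
    ring
  have h_w : |2 * (w x * deriv w x)| ≤ 2 * C * w x ^ 2 := by
    rw [abs_mul, abs_mul, abs_two, ← sq_abs (w x)]
    linarith [mul_le_mul_of_nonneg_left (hw' x) (abs_nonneg (w x))]
  have h_x : |2 * x| ≤ 1 + x ^ 2 := by
    rw [abs_mul, abs_two, ← sq_abs x]
    linarith [two_mul_le_add_sq 1 |x|]
  rw [h_deriv]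
  exact (abs_add_le _ _).trans (add_le_add h_w h_x)

theorem norm_formCommutator_le {A : E →L[ℂ] E} {Φ : ℝ → E →L[ℂ] E} {M K : ℝ}
    (hA_symm : (A : E →ₗ[ℂ] E).IsSymmetric) (hA : ‖A‖ ≤ 1)
    (hΦ : ContDiff ℝ 1 Φ) (hΦ_symm : ∀ x, (Φ x : E →ₗ[ℂ] E).IsSymmetric)
    (hw : ContDiff ℝ 1 w) (hw_slow : SlowlyIncreasing w) (hC : 0 ≤ C)
    (hw' : ∀ x, |deriv w x| ≤ C * |w x|) (hM : 0 ≤ M) (hK : 0 ≤ K)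
    (hΦ' : ∀ x, ‖deriv Φ x‖ ≤ M + K * |w x|) (u : 𝓢(ℝ, E)) :
    ‖formCommutator (schrodingerOp (confiningPotential w)) (diracOp A Φ) u‖ ≤
      (1 + M + K + 2 * C) * (∫ x, ⟪schrodingerOp (confiningPotential w) u x, u x⟫_ℂ).re := by
  set W := confiningPotential w
  have hW : ContDiff ℝ 1 W := (hw.pow 2).add (contDiff_const.add (contDiff_id.pow 2))
  have hW'_le := abs_deriv_confiningPotential_le (hw.differentiable one_ne_zero) hw'
  have h_weight : SlowlyIncreasing fun x : ℝ => 1 + x * x := .add (.const 1) (.mul .id .id)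
  have hW' : SlowlyIncreasing (deriv W) := by
    refine .of_norm_le (((SlowlyIncreasing.const (2 * C)).mul (hw_slow.mul hw_slow)).add h_weight)
      (hW.continuous_deriv le_rfl) fun x => ?_
    simpa only [← sq, Real.norm_eq_abs] using hW'_le x
  have hΦ'_slow : SlowlyIncreasing (deriv Φ) :=
    .of_norm_le ((SlowlyIncreasing.const M).add ((SlowlyIncreasing.const K).mul hw_slow.abs))
      (hΦ.continuous_deriv le_rfl) hΦ'
  have hW_slow := SlowlyIncreasing.of_deriv hW hW'
  have h_left := hΦ'_slow.integrable_inner ∂ₓ u u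
  have h_right := hΦ'_slow.integrable_inner u ∂ₓ u
  have h_potential := (hW'.smul (.const A)).integrable_inner u u
  rw [formCommutator_eq hA_symm hΦ hΦ'_slow hΦ_symm hW hW',
    integral_inner_schrodingerOp_self hW_slow, Complex.ofReal_re]
  simp only [matrixElement]
  rw [← integral_sub h_left h_right, ← integral_const_mul, ← integral_const_mul,
    ← integral_add (by exact h_left.sub h_right) (h_potential.const_mul _)]
  exact norm_integral_le_of_norm_le ((hW_slow.integrable_energyDensity u).const_mul _)
    (.of_forall fun x => norm_commutatorDensity_le hM hK hC hA (hΦ' x) (hW'_le x) _ _)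

theorem nelson_second_hypothesis_H0_general {A B : E →L[ℂ] E} {g f : ℝ → ℝ} {Cg M : ℝ}
    (hA_symm : (A : E →ₗ[ℂ] E).IsSymmetric) (hA : ‖A‖ ≤ 1)
    (hB_symm : (B : E →ₗ[ℂ] E).IsSymmetric) (hB : ‖B‖ ≤ 1)
    (hg : ContDiff ℝ 1 g) (hg_slow : SlowlyIncreasing g) (hCg : 0 ≤ Cg)
    (hg' : ∀ x, |deriv g x| ≤ Cg * |g x|) (hf : ContDiff ℝ 1 f) (hf' : ∀ x, |deriv f x| ≤ M)
    (u : 𝓢(ℝ, E)) (lam : ℝ) :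
    ‖formCommutator (schrodingerOp (confiningPotential fun x => lam * g x))
        (diracOp A fun x => (lam * g x) • B + f x • 1) u‖ ≤
      (1 + M + 3 * Cg) *
        (∫ x, ⟪schrodingerOp (confiningPotential fun x => lam * g x) u x, u x⟫_ℂ).re := by
  have hM : 0 ≤ M := (abs_nonneg _).trans (hf' 0)
  have hgd := hg.differentiable one_ne_zero
  have hfd := hf.differentiable one_ne_zero
  have hw' (x : ℝ) : |deriv (fun y => lam * g y) x| ≤ Cg * |lam * g x| := by
    rw [deriv_const_mul _ (hgd x), abs_mul, abs_mul, mul_left_comm]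
    exact mul_le_mul_of_nonneg_left (hg' x) (abs_nonneg lam)
  have hΦ' (x : ℝ) :
      ‖deriv (fun y => (lam * g y) • B + f y • (1 : E →L[ℂ] E)) x‖ ≤ M + Cg * |lam * g x| := by
    have h_deriv : HasDerivAt (fun y => (lam * g y) • B + f y • (1 : E →L[ℂ] E))
        (deriv (fun y => lam * g y) x • B + deriv f x • 1) x :=
      (((hgd x).const_mul lam).hasDerivAt.smul_const B).add
        ((hfd x).hasDerivAt.smul_const (1 : E →L[ℂ] E))
    rw [h_deriv.deriv, add_comm]
    refine norm_add_le_of_le ?_ ?_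
    · rw [norm_smul, Real.norm_eq_abs, ← mul_one M]
      exact mul_le_mul (hf' x) ContinuousLinearMap.norm_id_le (norm_nonneg _) hM
    · rw [norm_smul, Real.norm_eq_abs]
      exact (mul_le_of_le_one_right (abs_nonneg _) hB).trans (hw' x)
  have hΦ_symm (x : ℝ) :
      (((lam * g x) • B + f x • (1 : E →L[ℂ] E) : E →L[ℂ] E) : E →ₗ[ℂ] E).IsSymmetric := by
    intro a b
    have hB_symm_inner : ⟪B a, b⟫_ℂ = ⟪a, B b⟫_ℂ := hB_symm a b
    simp only [ContinuousLinearMap.coe_coe, add_apply, smul_apply, one_apply_eq_self,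
      inner_add_left, inner_add_right, inner_smul_left_eq_smul, inner_smul_right_eq_smul,
      hB_symm_inner]
  have h := norm_formCommutator_le hA_symm hA (by fun_prop) hΦ_symm (by fun_prop)
    ((SlowlyIncreasing.const lam).mul hg_slow) hCg hw' hM hCg hΦ' u
  convert h using 2
  ring

end ConfiningPotential

end FormCommutator

section DiracHamiltonian

variable {Γ : Matrix (Fin 4) (Fin 4) ℂ}

lemma H0op_eq_diracOp (Γ1 Γ2 : Matrix (Fin 4) (Fin 4) ℂ) (g f : ℝ → ℝ) (lam : ℝ) :
    H0op Γ1 Γ2 g f lam = diracOp (Mop Γ1) fun x => (lam * g x) • Mop Γ2 + f x • 1 := by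
  funext u x
  simp only [H0op, Dop, diracOp, add_apply, smul_apply, one_apply_eq_self, add_assoc]

lemma Nop_eq_schrodingerOp (g : ℝ → ℝ) (lam : ℝ) :
    Nop g lam = schrodingerOp (confiningPotential fun x => lam * g x) := by
  funext u x
  simp only [Nop, Qop, schrodingerOp, confiningPotential, mul_pow, add_smul, add_assoc]

lemma Mop_isSymmetric (hΓ : Γ.IsHermitian) : (Mop Γ : V4 →ₗ[ℂ] V4).IsSymmetric :=
  Matrix.isSymmetric_toEuclideanLin_iff.2 hΓ

lemma norm_Mop_le_one (hΓ : Γ.IsHermitian) (hΓ_sq : Γ * Γ = 1) : ‖Mop Γ‖ ≤ 1 := by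
  have h_sq : Mop Γ * Mop Γ = 1 := by
    rw [Mop, ← map_mul, hΓ_sq, map_one]
  have h_star : star (Mop Γ) = Mop Γ := by
    rw [Mop, ← map_star]
    exact congrArg _ hΓ
  have h_unitary : Mop Γ ∈ unitary (V4 →L[ℂ] V4) := by
    rw [Unitary.mem_iff, h_star, h_sq]
    exact ⟨rfl, rfl⟩
  exact (CStarRing.norm_of_mem_unitary h_unitary).le

end DiracHamiltonian

/-- second Nelson hypothesis (commutator bound) for `(H₀, N)`, with constant
`d = 2(1 + ‖f'‖_∞ + 2C_g)` uniform in the angular eigenvalue `λ ≥ 1`: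
`|⟨Nu, H₀u⟩ − ⟨H₀u, Nu⟩| ≤ d·⟨Nu, u⟩` for every Schwartz `u`. -/
theorem nelson_second_hypothesis_H0
    (Γ1 Γ2 : Matrix (Fin 4) (Fin 4) ℂ)
    (hΓ1_herm : Γ1.IsHermitian) (hΓ2_herm : Γ2.IsHermitian)
    (hΓ1_sq : Γ1 * Γ1 = 1) (hΓ2_sq : Γ2 * Γ2 = 1)
    (hanticomm : Γ1 * Γ2 + Γ2 * Γ1 = 0)
    (g : ℝ → ℝ) (hg_smooth : ContDiff ℝ (⊤ : ℕ∞) g) (Cb : ℝ) (hg_bdd : ∀ x : ℝ, |g x| ≤ Cb)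
    (Cg : ℝ) (hCg : 0 < Cg) (hg' : ∀ x : ℝ, |deriv g x| ≤ Cg * |g x|)
    (f : ℝ → ℝ) (hf_smooth : ContDiff ℝ (⊤ : ℕ∞) f)
    (Mf : ℝ) (hf_bdd : ∀ x : ℝ, |f x| ≤ Mf)
    (Mf' : ℝ) (hf'_bdd : ∀ x : ℝ, |deriv f x| ≤ Mf') :
    0 < 2 * (1 + Mf' + 2 * Cg) ∧
    ∀ (u : SchwartzMap ℝ V4) (lam : ℝ), 1 ≤ lam →
      ‖L2inner (Nop g lam ⇑u) (H0op Γ1 Γ2 g f lam ⇑u)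
          - L2inner (H0op Γ1 Γ2 g f lam ⇑u) (Nop g lam ⇑u)‖ ≤
        2 * (1 + Mf' + 2 * Cg) * (L2inner (Nop g lam ⇑u) ⇑u).re := by
  have hMf' : 0 ≤ Mf' := (abs_nonneg _).trans (hf'_bdd 0)
  refine ⟨by positivity, fun u lam _ => ?_⟩
  have hg_slow : SlowlyIncreasing g := .of_norm_le (.const Cb) hg_smooth.continuous hg_bdd
  have h_bound := nelson_second_hypothesis_H0_general
    (Mop_isSymmetric hΓ1_herm) (norm_Mop_le_one hΓ1_herm hΓ1_sq)
    (Mop_isSymmetric hΓ2_herm) (norm_Mop_le_one hΓ2_herm hΓ2_sq)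
    (hg_smooth.of_le (by simp)) hg_slow hCg.le hg' (hf_smooth.of_le (by simp)) hf'_bdd u lam
  rw [← H0op_eq_diracOp, ← Nop_eq_schrodingerOp] at h_bound
  have h_energy_nonneg : 0 ≤ (L2inner (Nop g lam u) u).re :=
    nonneg_of_mul_nonneg_right ((norm_nonneg _).trans h_bound) (by positivity)
  exact h_bound.trans (mul_le_mul_of_nonneg_right (by linarith) h_energy_nonneg)
end
end

section
/- There exists a constant c > 0 (depending on S, j₋ and C_g, but uniform in λ ≥ 1) such that for every u in the Schwartz space 𝒮(ℝ, ℂ⁴): ‖A₋u‖ ≤ c‖Nu‖. -/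
noncomputable section

open MeasureTheory

/-- The coefficient `R₋(x) = j₋(x/S)² · x` of the conjugate operator at the double horizon. -/
def Rm (jm : ℝ → ℝ) (S : ℝ) (x : ℝ) : ℝ := (jm (x / S)) ^ 2 * x

/-- The conjugate operator at the double horizon, `A₋u = R₋Du − (i/2)R₋'u = ½{R₋, D}u`. -/
def Amop (jm : ℝ → ℝ) (S : ℝ) (u : ℝ → V4) : ℝ → V4 :=
  fun x => Rm jm S x • Dop u x - ((Complex.I / 2) * ((deriv (Rm jm S) x : ℝ) : ℂ)) • u x

/-!
Let `s = 2 + x²` and let `W = λ²g² + 1 + x²` be the full potential, so that `Nu = -u'' + Wu`.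
The function `s(‖u'‖² + ⟪u, u''⟫) - ‖u‖²` is the derivative of `s⟪u, u'⟫ - x‖u‖²`, so its integral
vanishes. Now `⟪u, u''⟫ = W‖u‖² - ⟪u, Nu⟫`, and because `W ≥ s - 1` the term `sW‖u‖²` absorbs both
`‖u‖²` and `s⟪u, Nu⟫`, the latter up to a multiple of `‖Nu‖²`. This bounds
`∫ (s‖u'‖² + ‖u‖² / 2)` by `2‖Nu‖²` with a constant that does not see `λ` and `g`. Pointwise, `A₋u`
is controlled by `xu'` and `u`: `R₋` grows at most linearly, `R₋'` is bounded, and both bounds are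
invariant under the dilation by `S`.
-/

section WeightedEnergy

open scoped SchwartzMap RealInnerProductSpace

variable {E : Type*} [NormedAddCommGroup E] [InnerProductSpace ℝ E]

lemma integrable_mul_inner_schwartz {φ : ℝ → ℝ} (hφ : φ.HasTemperateGrowth) (u v : 𝓢(ℝ, E)) :
    Integrable fun x => φ x * ⟪u x, v x⟫ := by
  refine (SchwartzMap.pairing (innerSL ℝ) (SchwartzMap.smulLeftCLM E φ u) v).integrable.congr
    (.of_forall fun x => ?_)
  change ⟪SchwartzMap.smulLeftCLM E φ u x, v x⟫ = φ x * ⟪u x, v x⟫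
  rw [SchwartzMap.smulLeftCLM_apply_apply hφ, real_inner_smul_left]

lemma integrable_weighted_energy (a b : ℝ) (u : 𝓢(ℝ, E)) :
    Integrable fun x => (a + x ^ 2) * ‖deriv u x‖ ^ 2 + b * ‖u x‖ ^ 2 := by
  let u' := SchwartzMap.derivCLM ℝ E u
  have hderiv := integrable_mul_inner_schwartz (φ := fun x => a + x ^ 2) (by fun_prop) u' u'
  have hself := integrable_mul_inner_schwartz (φ := fun _ => b) (by fun_prop) u u
  simpa only [Pi.add_def, real_inner_self_eq_norm_sq, u', SchwartzMap.derivCLM_apply]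
    using hderiv.add hself

lemma integrable_weighted_virial (a : ℝ) (u : 𝓢(ℝ, E)) :
    Integrable fun x =>
      (a + x ^ 2) * (‖deriv u x‖ ^ 2 + ⟪u x, deriv (deriv u) x⟫) - ‖u x‖ ^ 2 := by
  let u' := SchwartzMap.derivCLM ℝ E u
  let u'' := SchwartzMap.derivCLM ℝ E u'
  have hcross := integrable_mul_inner_schwartz (φ := fun x => a + x ^ 2) (by fun_prop) u u''
  refine ((integrable_weighted_energy a (-1) u).add hcross).congr (.of_forall fun x => ?_)
  have hu' : ⇑u' = deriv u := funext (SchwartzMap.derivCLM_apply ℝ u)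
  simp only [Pi.add_apply, u'', SchwartzMap.derivCLM_apply, hu']
  ring

lemma hasDerivAt_weighted_virial (a : ℝ) (u : 𝓢(ℝ, E)) (x : ℝ) :
    HasDerivAt (fun y => (a + y ^ 2) * ⟪u y, deriv u y⟫ - y * ‖u y‖ ^ 2)
      ((a + x ^ 2) * (‖deriv u x‖ ^ 2 + ⟪u x, deriv (deriv u) x⟫) - ‖u x‖ ^ 2) x := by
  have hu := u.hasDerivAt x
  have hu' : HasDerivAt (deriv u) (deriv (deriv u) x) x :=
    (SchwartzMap.derivCLM ℝ E u).hasDerivAt x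
  have hweight : HasDerivAt (fun y : ℝ => a + y ^ 2) (2 * x) x := by
    simpa using (hasDerivAt_pow 2 x).const_add a
  refine ((hweight.mul (hu.inner ℝ hu')).sub
    ((hasDerivAt_id x).mul hu.norm_sq)).congr_deriv ?_
  rw [real_inner_self_eq_norm_sq]
  simp only [id]
  ring

lemma integral_weighted_virial_eq_zero (a : ℝ) (u : 𝓢(ℝ, E)) :
    ∫ x, ((a + x ^ 2) * (‖deriv u x‖ ^ 2 + ⟪u x, deriv (deriv u) x⟫) - ‖u x‖ ^ 2) = 0 := by
  let u' := SchwartzMap.derivCLM ℝ E u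
  have hcross := integrable_mul_inner_schwartz (φ := fun x => a + x ^ 2) (by fun_prop) u u'
  have hself := integrable_mul_inner_schwartz (φ := fun x => x) (by fun_prop) u u
  refine integral_eq_zero_of_hasDerivAt_of_integrable (hasDerivAt_weighted_virial a u)
    (integrable_weighted_virial a u) ?_
  simpa only [Pi.sub_def, real_inner_self_eq_norm_sq, u', SchwartzMap.derivCLM_apply]
    using hcross.sub hself

lemma norm_sq_le_inner_add_norm_neg_add_smul_sq {s W : ℝ} (hs : 2 ≤ s) (hW : s - 1 ≤ W)
    (v w : E) : 3 / 2 * ‖v‖ ^ 2 ≤ s * ⟪v, w⟫ + 2 * ‖-w + W • v‖ ^ 2 := by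
  set n := -w + W • v
  have hinner : ⟪v, w⟫ = W * ‖v‖ ^ 2 - ⟪v, n⟫ := by
    simp only [n, inner_add_right, inner_neg_right, real_inner_smul_right,
      real_inner_self_eq_norm_sq]
    ring
  have hcauchy : s * ⟪v, n⟫ ≤ s * (‖v‖ * ‖n‖) := by
    gcongr
    exact real_inner_le_norm v n
  have hyoung : s * (‖v‖ * ‖n‖) ≤ s ^ 2 / 8 * ‖v‖ ^ 2 + 2 * ‖n‖ ^ 2 := by
    linarith [sq_nonneg (s * ‖v‖ - 4 * ‖n‖)]
  have hpotential : (3 / 2 + s ^ 2 / 8) * ‖v‖ ^ 2 ≤ s * W * ‖v‖ ^ 2 := by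
    gcongr
    nlinarith
  rw [hinner]
  linarith

theorem integral_weighted_energy_le {W : ℝ → ℝ} (hW : ∀ x, 1 + x ^ 2 ≤ W x) (u : 𝓢(ℝ, E))
    (hN : Integrable fun x => ‖-deriv (deriv u) x + W x • u x‖ ^ 2) :
    ∫ x, ((2 + x ^ 2) * ‖deriv u x‖ ^ 2 + 1 / 2 * ‖u x‖ ^ 2) ≤
      2 * ∫ x, ‖-deriv (deriv u) x + W x • u x‖ ^ 2 := by
  let virial x := (2 + x ^ 2) * (‖deriv u x‖ ^ 2 + ⟪u x, deriv (deriv u) x⟫) - ‖u x‖ ^ 2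
  have hvirial : Integrable virial := integrable_weighted_virial 2 u
  have hpointwise (x : ℝ) : (2 + x ^ 2) * ‖deriv u x‖ ^ 2 + 1 / 2 * ‖u x‖ ^ 2 ≤
      virial x + 2 * ‖-deriv (deriv u) x + W x • u x‖ ^ 2 := by
    have := norm_sq_le_inner_add_norm_neg_add_smul_sq (s := 2 + x ^ 2) (W := W x)
      (by linarith [sq_nonneg x]) (by linarith [hW x]) (u x) (deriv (deriv u) x)
    linarith
  calc
    ∫ x, ((2 + x ^ 2) * ‖deriv u x‖ ^ 2 + 1 / 2 * ‖u x‖ ^ 2)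
      ≤ ∫ x, (virial x + 2 * ‖-deriv (deriv u) x + W x • u x‖ ^ 2) :=
        integral_mono (integrable_weighted_energy 2 (1 / 2) u) (hvirial.add (hN.const_mul 2))
          hpointwise
    _ = 2 * ∫ x, ‖-deriv (deriv u) x + W x • u x‖ ^ 2 := by
        rw [integral_add hvirial (hN.const_mul 2), integral_weighted_virial_eq_zero, zero_add,
          integral_const_mul]

end WeightedEnergy

section ComparisonOperator

open scoped SchwartzMap

lemma Nop_eq (g : ℝ → ℝ) (lam : ℝ) (u : ℝ → V4) (x : ℝ) :
    Nop g lam u x = -deriv (deriv u) x + (lam ^ 2 * g x ^ 2 + (1 + x ^ 2)) • u x := by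
  simp only [Nop, Qop, add_smul, add_assoc]

lemma integral_weighted_energy_le_Nop {g : ℝ → ℝ} {lam : ℝ} {u : 𝓢(ℝ, V4)}
    (hN : MemLp (Nop g lam u) 2) :
    ∫ x, ((2 + x ^ 2) * ‖deriv u x‖ ^ 2 + 1 / 2 * ‖u x‖ ^ 2) ≤
      2 * ∫ x, ‖Nop g lam u x‖ ^ 2 := by
  have hsq := hN.norm.integrable_sq
  simp only [Nop_eq] at hsq ⊢
  exact integral_weighted_energy_le (fun x => le_add_of_nonneg_left (by positivity)) u hsq

lemma memLp_Nop_s10 {g : ℝ → ℝ} (hg : Measurable g) {C : ℝ} (hC : ∀ x, |g x| ≤ C) (lam : ℝ)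
    (u : 𝓢(ℝ, V4)) : MemLp (Nop g lam u) 2 := by
  let u'' := SchwartzMap.derivCLM ℝ V4 (SchwartzMap.derivCLM ℝ V4 u)
  let w := SchwartzMap.smulLeftCLM V4 (fun x : ℝ => 1 + x ^ 2) u
  have hpotential : MemLp (fun x => (lam ^ 2 * g x ^ 2) • u x) 2 := by
    refine (u.memLp 2).of_le_mul (c := lam ^ 2 * C ^ 2) (by fun_prop) (.of_forall fun x => ?_)
    have hsq : g x ^ 2 ≤ C ^ 2 := sq_le_sq' (abs_le.1 (hC x)).1 (abs_le.1 (hC x)).2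
    rw [norm_smul, Real.norm_of_nonneg (by positivity)]
    gcongr
  have hNop : Nop g lam u = ⇑(w - u'') + fun x => (lam ^ 2 * g x ^ 2) • u x := by
    ext1 x
    have hw : w x = (1 + x ^ 2) • u x := SchwartzMap.smulLeftCLM_apply_apply (by fun_prop) u x
    have hu'' : u'' x = deriv (deriv u) x := rfl
    rw [Nop_eq, Pi.add_apply, sub_apply, hw, hu'', add_smul]
    abel
  rw [hNop]
  exact ((w - u'').memLp 2).add hpotential

end ComparisonOperator

section ConjugateOperator

variable {jm : ℝ → ℝ} {S x M L : ℝ}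

lemma hasDerivAt_Rm (hjm : DifferentiableAt ℝ jm (x / S)) :
    HasDerivAt (Rm jm S)
      (jm (x / S) ^ 2 + 2 * jm (x / S) * (x / S * deriv jm (x / S))) x := by
  have hdilation : HasDerivAt (fun y => jm (y / S)) (deriv jm (x / S) * (1 / S)) x :=
    hjm.hasDerivAt.comp x ((hasDerivAt_id x).div_const S)
  refine ((hdilation.pow 2).mul (hasDerivAt_id x)).congr_deriv ?_
  simp only [Pi.pow_apply, id]
  ring

lemma abs_Rm_le (hM : |jm (x / S)| ≤ M) : |Rm jm S x| ≤ M ^ 2 * |x| := by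
  rw [Rm, abs_mul, abs_pow]
  gcongr

lemma abs_deriv_Rm_le (hjm : DifferentiableAt ℝ jm (x / S)) (hM : |jm (x / S)| ≤ M)
    (hL : |x / S * deriv jm (x / S)| ≤ L) : |deriv (Rm jm S) x| ≤ M ^ 2 + 2 * M * L := by
  have hM0 : 0 ≤ M := (abs_nonneg _).trans hM
  rw [(hasDerivAt_Rm hjm).deriv]
  calc
    _ ≤ |jm (x / S)| ^ 2 + 2 * |jm (x / S)| * |x / S * deriv jm (x / S)| := by
      grw [abs_add_le, abs_pow, abs_mul (2 * _), abs_mul 2, abs_two]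
    _ ≤ M ^ 2 + 2 * M * L := by gcongr

lemma norm_Amop_le {α β : ℝ} (hR : |Rm jm S x| ≤ α * |x|) (hR' : |deriv (Rm jm S) x| ≤ β)
    (u : ℝ → V4) : ‖Amop jm S u x‖ ≤ α * |x| * ‖deriv u x‖ + β / 2 * ‖u x‖ := by
  have hcoeff : ‖Complex.I / 2 * ((deriv (Rm jm S) x : ℝ) : ℂ)‖ = |deriv (Rm jm S) x| / 2 := by
    simp only [norm_mul, norm_div, Complex.norm_I, Complex.norm_two, Complex.norm_real,
      Real.norm_eq_abs]
    ring
  calc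
    ‖Amop jm S u x‖
      ≤ ‖Rm jm S x • (-Complex.I) • deriv u x‖
          + ‖(Complex.I / 2 * ((deriv (Rm jm S) x : ℝ) : ℂ)) • u x‖ := norm_sub_le _ _
    _ = |Rm jm S x| * ‖deriv u x‖ + |deriv (Rm jm S) x| / 2 * ‖u x‖ := by
      rw [norm_smul, norm_smul, norm_smul, hcoeff, norm_neg, Complex.norm_I, one_mul,
        Real.norm_eq_abs]
    _ ≤ α * |x| * ‖deriv u x‖ + β / 2 * ‖u x‖ := by gcongr

lemma norm_Amop_sq_le {α β : ℝ} (hR : |Rm jm S x| ≤ α * |x|) (hR' : |deriv (Rm jm S) x| ≤ β)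
    (u : ℝ → V4) :
    ‖Amop jm S u x‖ ^ 2 ≤
      (2 * α ^ 2 + β ^ 2) * ((2 + x ^ 2) * ‖deriv u x‖ ^ 2 + 1 / 2 * ‖u x‖ ^ 2) := by
  calc
    ‖Amop jm S u x‖ ^ 2
      ≤ (α * |x| * ‖deriv u x‖ + β / 2 * ‖u x‖) ^ 2 := by
        gcongr
        exact norm_Amop_le hR hR' u
    _ ≤ 2 * ((α * |x| * ‖deriv u x‖) ^ 2 + (β / 2 * ‖u x‖) ^ 2) := add_sq_le
    _ = 2 * α ^ 2 * (x ^ 2 * ‖deriv u x‖ ^ 2) + β ^ 2 * (1 / 2 * ‖u x‖ ^ 2) := by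
        rw [mul_pow, mul_pow, sq_abs]
        ring
    _ ≤ (2 * α ^ 2 + β ^ 2) * (x ^ 2 * ‖deriv u x‖ ^ 2)
          + (2 * α ^ 2 + β ^ 2) * (1 / 2 * ‖u x‖ ^ 2) := by
        gcongr <;> linarith [sq_nonneg α, sq_nonneg β]
    _ ≤ (2 * α ^ 2 + β ^ 2) * ((2 + x ^ 2) * ‖deriv u x‖ ^ 2 + 1 / 2 * ‖u x‖ ^ 2) := by
        rw [← mul_add]
        gcongr
        linarith

theorem L2norm_Amop_le {α β : ℝ} (hR : ∀ x, |Rm jm S x| ≤ α * |x|)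
    (hR' : ∀ x, |deriv (Rm jm S) x| ≤ β) {g : ℝ → ℝ} {lam : ℝ} {u : SchwartzMap ℝ V4}
    (hN : MemLp (Nop g lam u) 2) :
    L2norm (Amop jm S u) ≤ √((2 * α ^ 2 + β ^ 2) * 2) * L2norm (Nop g lam u) := by
  rw [L2norm, L2norm, ← Real.sqrt_mul (by positivity)]
  refine Real.sqrt_le_sqrt ?_
  calc
    ∫ x, ‖Amop jm S u x‖ ^ 2
      ≤ ∫ x, (2 * α ^ 2 + β ^ 2) * ((2 + x ^ 2) * ‖deriv u x‖ ^ 2 + 1 / 2 * ‖u x‖ ^ 2) :=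
        integral_mono_of_nonneg (.of_forall fun x => sq_nonneg _)
          ((integrable_weighted_energy 2 (1 / 2) u).const_mul _)
          (.of_forall fun x => norm_Amop_sq_le (hR x) (hR' x) u)
    _ = (2 * α ^ 2 + β ^ 2) *
          ∫ x, ((2 + x ^ 2) * ‖deriv u x‖ ^ 2 + 1 / 2 * ‖u x‖ ^ 2) := integral_const_mul _ _
    _ ≤ (2 * α ^ 2 + β ^ 2) * 2 * ∫ x, ‖Nop g lam u x‖ ^ 2 := by
        rw [mul_assoc]
        gcongr
        exact integral_weighted_energy_le_Nop hN

end ConjugateOperator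

lemma exists_abs_mul_deriv_le_of_const_off_Icc {j : ℝ → ℝ} (hj : ContDiff ℝ 1 j)
    {a b c₁ c₂ : ℝ} (hleft : ∀ t ≤ a, j t = c₁) (hright : ∀ t, b ≤ t → j t = c₂) :
    ∃ L, ∀ t, |t * deriv j t| ≤ L := by
  have hsupport : HasCompactSupport fun t => t * deriv j t := by
    refine .intro (isCompact_Icc (a := a) (b := b)) fun t ht => mul_eq_zero_of_right t ?_
    rcases not_and_or.1 ht with hta | htb
    · have : j =ᶠ[nhds t] fun _ => c₁ :=
        (eventually_lt_nhds (not_le.1 hta)).mono fun s hs => hleft s hs.le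
      rw [this.deriv_eq, deriv_const]
    · have : j =ᶠ[nhds t] fun _ => c₂ :=
        (eventually_gt_nhds (not_le.1 htb)).mono fun s hs => hright s hs.le
      rw [this.deriv_eq, deriv_const]
  exact hsupport.exists_bound_of_continuous (continuous_id.mul (hj.continuous_deriv le_rfl))

theorem nelson_first_hypothesis_Aminus_general {jm : ℝ → ℝ} (hjm : Differentiable ℝ jm)
    {M L : ℝ} (hM : ∀ t, |jm t| ≤ M) (hL : ∀ t, |t * deriv jm t| ≤ L) :
    ∃ c : ℝ, 0 < c ∧ ∀ S ≠ 0, ∀ (g : ℝ → ℝ) (u : SchwartzMap ℝ V4) (lam : ℝ),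
      MemLp (Nop g lam u) 2 → L2norm (Amop jm S u) ≤ c * L2norm (Nop g lam u) := by
  refine ⟨√((2 * (M ^ 2) ^ 2 + (M ^ 2 + 2 * M * L) ^ 2) * 2) + 1, by positivity,
    fun S _ g u lam hN => ?_⟩
  have hbound := L2norm_Amop_le (fun x => abs_Rm_le (hM (x / S)))
    (fun x => abs_deriv_Rm_le (hjm _) (hM _) (hL _)) hN
  exact hbound.trans (mul_le_mul_of_nonneg_right (by linarith) (Real.sqrt_nonneg _))

/-- first Nelson hypothesis for `(A₋, N)`: there is `c > 0` (depending on
`S`, `j₋`, `C_g` but uniform in `λ ≥ 1`) such that `‖A₋u‖ ≤ c‖Nu‖` for every Schwartz `u`. -/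
theorem nelson_first_hypothesis_Aminus
    (g : ℝ → ℝ) (hg_smooth : ContDiff ℝ (⊤ : ℕ∞) g) (Cb : ℝ) (hg_bdd : ∀ x : ℝ, |g x| ≤ Cb)
    (Cg : ℝ) (hCg : 0 < Cg) (hg' : ∀ x : ℝ, |deriv g x| ≤ Cg * |g x|)
    (S : ℝ) (hS : 1 ≤ S)
    (jm : ℝ → ℝ) (hjm_smooth : ContDiff ℝ (⊤ : ℕ∞) jm)
    (hjm_range : ∀ t : ℝ, jm t ∈ Set.Icc (0 : ℝ) 1)
    (hjm_one : ∀ t : ℝ, t ≤ -2 → jm t = 1)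
    (hjm_zero : ∀ t : ℝ, -(3 / 2 : ℝ) ≤ t → jm t = 0) :
    ∃ c : ℝ, 0 < c ∧ ∀ (u : SchwartzMap ℝ V4) (lam : ℝ), 1 ≤ lam →
      L2norm (Amop jm S ⇑u) ≤ c * L2norm (Nop g lam ⇑u) := by
  have hjm_abs (t : ℝ) : |jm t| ≤ 1 := abs_le.2 ⟨by linarith [(hjm_range t).1], (hjm_range t).2⟩
  obtain ⟨L, hL⟩ := exists_abs_mul_deriv_le_of_const_off_Icc (hjm_smooth.of_le (by simp))
    hjm_one hjm_zero
  obtain ⟨c, hc, hbound⟩ := nelson_first_hypothesis_Aminus_general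
    (hjm_smooth.differentiable (by simp)) hjm_abs hL
  exact ⟨c, hc, fun u lam _ => hbound S (by linarith) g u lam
    (memLp_Nop_s10 hg_smooth.continuous.measurable hg_bdd lam u)⟩
end
end
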